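/- Consider lossless transmission at source-channel rate b = 1 of arbitrarily correlated sources (S1, S2) over a discrete memoryless multiple access channel p(y1|x1,x2) with side information W1 at the receiver. The rate b = 1 is achievable if there exist a finite set Q with |Q| ≤ min{|X1|·|X2|, |Y1|} and a joint distribution of the form p(q,s1,s2,w1,x1,x2,y1) = p(q)·p(s1,s2,w1)·p(x1|q,s1)·p(x2|q,s2)·p(y1|x1,x2), where p(s1,s2,w1) is the given source/side-information pmf and p(y1|x1,x2) is the given channel law, such that: H(S1|S2,W1) < I(X1;Y1|X2,S2,W1,Q), H(S2|S1,W1) < I(X2;Y1|X1,S1,W1,Q), H(S1,S2|U,W1) < I(X1,X2;Y1|U,W1,Q), and H(S1,S2|W1) < I(X1,X2;Y1|W1), where U is the Gács–Körner common part of S1 and S2. -/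

import Mathlib

open scoped BigOperators Classical

noncomputable section

/-- Probability that the random variable `X` equals `a`, under the pmf `μ`
on the finite sample space `Ω`. -/
def prD {Ω α : Type} [Fintype Ω] (μ : Ω → ℝ) (X : Ω → α) (a : α) : ℝ :=
  ∑ ω, if X ω = a then μ ω else 0

/-- Shannon entropy (in nats) of the random variable `X` under the pmf `μ`. -/
def ent {Ω α : Type} [Fintype Ω] [Fintype α] (μ : Ω → ℝ) (X : Ω → α) : ℝ :=
  -∑ a, prD μ X a * Real.log (prD μ X a)

/-- Conditional entropy `H(X | Y)` under the pmf `μ`. -/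
def condEnt {Ω α β : Type} [Fintype Ω] [Fintype α] [Fintype β]
    (μ : Ω → ℝ) (X : Ω → α) (Y : Ω → β) : ℝ :=
  ent μ (fun ω => (X ω, Y ω)) - ent μ Y

/-- Mutual information `I(X ; Y)` under the pmf `μ`. -/
def mutInf {Ω α β : Type} [Fintype Ω] [Fintype α] [Fintype β]
    (μ : Ω → ℝ) (X : Ω → α) (Y : Ω → β) : ℝ :=
  ent μ X + ent μ Y - ent μ (fun ω => (X ω, Y ω))

/-- Conditional mutual information `I(X ; Y | Z)` under the pmf `μ`. -/
def condMutInf {Ω α β γ : Type} [Fintype Ω] [Fintype α] [Fintype β] [Fintype γ]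
    (μ : Ω → ℝ) (X : Ω → α) (Y : Ω → β) (Z : Ω → γ) : ℝ :=
  condEnt μ X Z - condEnt μ X (fun ω => (Y ω, Z ω))

/-- `p` is a probability mass function on the finite type `α`. -/
def IsPmf {α : Type} [Fintype α] (p : α → ℝ) : Prop :=
  (∀ a, 0 ≤ p a) ∧ ∑ a, p a = 1

/-- `(u1, u2)` (with values in `Fin nu`) is a Gács–Körner common part of the sources `S1`
and `S2` (obtained from the sample space `R` via the projections `projS1`, `projS2`)
under the pmf `pS`: it is a common deterministic function of both sources (a.s.), and it
has maximal entropy among all such common functions. -/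
def IsGKCommonPart {S1 S2 R : Type} [Fintype S1] [Fintype S2] [Fintype R]
    (pS : R → ℝ) (projS1 : R → S1) (projS2 : R → S2) {nu : ℕ}
    (u1 : S1 → Fin nu) (u2 : S2 → Fin nu) : Prop :=
  (∀ r, 0 < pS r → u1 (projS1 r) = u2 (projS2 r)) ∧
  ∀ (k : ℕ) (v1 : S1 → Fin k) (v2 : S2 → Fin k),
    (∀ r, 0 < pS r → v1 (projS1 r) = v2 (projS2 r)) →
    ent pS (fun r => v1 (projS1 r)) ≤ ent pS (fun r => u1 (projS1 r))

/-- Average probability of error of the joint source-channel code `(f1, f2, g)` for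
transmitting the i.i.d. source blocks `(S1^m, S2^m)` over `n` uses of the DM MAC
`chan` to a receiver having side information `W1^m`. -/
def macErr {S1 S2 W1 X1 X2 Y1 : Type} [Fintype S1] [Fintype S2] [Fintype W1]
    [Fintype X1] [Fintype X2] [Fintype Y1]
    (pS : S1 × S2 × W1 → ℝ) (chan : X1 → X2 → Y1 → ℝ) (m n : ℕ)
    (f1 : (Fin m → S1) → Fin n → X1) (f2 : (Fin m → S2) → Fin n → X2)
    (g : (Fin n → Y1) → (Fin m → W1) → (Fin m → S1) × (Fin m → S2)) : ℝ :=
  ∑ sb : Fin m → S1 × S2 × W1, ∑ yb : Fin n → Y1,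
    ((∏ i, pS (sb i)) *
      ∏ j, chan (f1 (fun i => (sb i).1) j) (f2 (fun i => (sb i).2.1) j) (yb j)) *
    (if g yb (fun i => (sb i).2.2) = (fun i => (sb i).1, fun i => (sb i).2.1)
      then 0 else 1)

/-- Source-channel rate `b` (channel uses per source sample) is achievable for the
MAC with receiver side information. -/
def macAchievable {S1 S2 W1 X1 X2 Y1 : Type} [Fintype S1] [Fintype S2] [Fintype W1]
    [Fintype X1] [Fintype X2] [Fintype Y1]
    (pS : S1 × S2 × W1 → ℝ) (chan : X1 → X2 → Y1 → ℝ) (b : ℝ) : Prop :=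
  ∀ ε : ℝ, 0 < ε → ∃ m n : ℕ, 0 < m ∧ 0 < n ∧ (n : ℝ) = b * m ∧
    ∃ (f1 : (Fin m → S1) → Fin n → X1) (f2 : (Fin m → S2) → Fin n → X2)
      (g : (Fin n → Y1) → (Fin m → W1) → (Fin m → S1) × (Fin m → S2)),
      macErr pS chan m n f1 f2 g < ε

/-- The joint single-letter distribution
`p(q,s1,s2,w1,x1,x2,y1) = p(q) p(s1,s2,w1) p(x1|q,s1) p(x2|q,s2) p(y1|x1,x2)`. -/
def macJointMeasure {S1 S2 W1 X1 X2 Y1 : Type} (nq : ℕ)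
    (pq : Fin nq → ℝ) (pS : S1 × S2 × W1 → ℝ)
    (px1 : Fin nq → S1 → X1 → ℝ) (px2 : Fin nq → S2 → X2 → ℝ)
    (chan : X1 → X2 → Y1 → ℝ) :
    Fin nq × (S1 × S2 × W1) × X1 × X2 × Y1 → ℝ :=
  fun z => pq z.1 * pS z.2.1 * px1 z.1 z.2.1.1 z.2.2.1 * px2 z.1 z.2.1.2.1 z.2.2.2.1 *
    chan z.2.2.1 z.2.2.2.1 z.2.2.2.2

theorem sum_prod_codebook {K V : Type} [Fintype K] [DecidableEq K] [Fintype V] (w : K → V → ℝ) :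
    ∑ f : K → V, ∏ k, w k (f k) = ∏ k, ∑ v, w k v := by
  rw [Finset.prod_univ_sum, Fintype.piFinset_univ]

theorem sum_codebook_mul_apply {K V : Type} [Fintype K] [Fintype V] (w : K → V → ℝ)
    (hw : ∀ k, ∑ v, w k v = 1) (k₀ : K) (F : V → ℝ) :
    ∑ f : K → V, (∏ k, w k (f k)) * F (f k₀) = ∑ v, w k₀ v * F v := by
  have h : ∀ f : K → V, (∏ k, w k (f k)) * F (f k₀)
      = ∏ k, w k (f k) * (if k = k₀ then F (f k) else 1) := by
    intro f
    rw [Finset.prod_mul_distrib]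
    simp
  simp_rw [h]
  rw [sum_prod_codebook (fun k v => w k v * (if k = k₀ then F v else 1)),
    Finset.prod_eq_single k₀]
  · simp
  · intro b _ hb
    simp [hb, hw]
  · simp

theorem sum_codebook_mul_apply₂ {K V : Type} [Fintype K] [Fintype V] (w : K → V → ℝ)
    (hw : ∀ k, ∑ v, w k v = 1) {k₀ k₁ : K} (hk : k₀ ≠ k₁) (F : V → V → ℝ) :
    ∑ f : K → V, (∏ k, w k (f k)) * F (f k₀) (f k₁)
      = ∑ v, w k₀ v * ∑ v', w k₁ v' * F v v' := by
  have h : ∀ f : K → V, (∏ k, w k (f k)) * F (f k₀) (f k₁) = ∑ v,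
      ∏ k, w k (f k) * ((if k = k₀ then (if f k = v then 1 else 0) else 1) *
        (if k = k₁ then F v (f k) else 1)) := by
    intro f
    simp_rw [Finset.prod_mul_distrib]
    simp
  simp_rw [h]
  rw [Finset.sum_comm]
  refine Finset.sum_congr rfl fun v _ => ?_
  rw [sum_prod_codebook (fun k x => w k x * ((if k = k₀ then (if x = v then 1 else 0) else 1) *
        (if k = k₁ then F v x else 1))), Finset.prod_eq_mul k₀ k₁ hk]
  · simp [hk, hk.symm]
  · intro b _ hb
    simp [hb.1, hb.2, hw]
  · simp
  · simp

theorem exists_le_of_sum_weight_mul_le {I : Type} [Fintype I] (w h : I → ℝ) (B : ℝ)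
    (hw : ∀ i, 0 ≤ w i) (hw1 : ∑ i, w i = 1) (hB : ∑ i, w i * h i ≤ B) : ∃ i, h i ≤ B := by
  by_contra! hc
  have hz : ∑ i, w i * (h i - B) = 0 := by
    refine le_antisymm ?_ (Finset.sum_nonneg fun i _ => mul_nonneg (hw i) (by linarith [hc i]))
    simp_rw [mul_sub, Finset.sum_sub_distrib, ← Finset.sum_mul, hw1]
    linarith
  rw [Finset.sum_eq_zero_iff_of_nonneg
    (fun i _ => mul_nonneg (hw i) (by linarith [hc i]))] at hz
  have : ∀ i, w i = 0 := fun i =>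
    (mul_eq_zero.mp (hz i (Finset.mem_univ i))).resolve_right (by linarith [hc i])
  simp [this] at hw1

theorem exists_chernoff_bound {Ω : Type} [Fintype Ω] (p r : Ω → ℝ) (hp : IsPmf p)
    (hpr : ∀ z, 0 < p z → 0 < r z) (δ : ℝ)
    (hδ : δ < ∑ z, p z * (Real.log (p z) - Real.log (r z))) :
    ∃ c : ℝ, 0 ≤ c ∧ c < 1 ∧ ∀ n : ℕ,
      ∑ z : Fin n → Ω, (∏ i, p (z i)) *
        (if ∏ i, p (z i) ≤ Real.exp (n * δ) * ∏ i, r (z i) then 1 else 0) ≤ c ^ n := by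
  set L : Ω → ℝ := fun z => δ - (Real.log (p z) - Real.log (r z)) with hL
  set Φ : ℝ → ℝ := fun t => ∑ z, p z * Real.exp (t * L z) with hΦ
  have hd : HasDerivAt Φ (∑ z, p z * L z) 0 := by
    have : ∀ z ∈ Finset.univ, HasDerivAt (fun t => p z * Real.exp (t * L z)) (p z * L z) 0 := by
      intro z _
      have h1 : HasDerivAt (fun t : ℝ => t * L z) (1 * L z) 0 := (hasDerivAt_id 0).mul_const _
      simpa using (h1.exp.const_mul (p z))
    simpa [hΦ] using HasDerivAt.fun_sum this
  have hneg : ∑ z, p z * L z < 0 := by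
    have : ∑ z, p z * L z
        = δ * ∑ z, p z - ∑ z, p z * (Real.log (p z) - Real.log (r z)) := by
      rw [Finset.mul_sum, ← Finset.sum_sub_distrib]
      exact Finset.sum_congr rfl fun z _ => by simp only [hL]; ring
    rw [this, hp.2]
    linarith
  have h0 : Φ 0 = 1 := by simp [hΦ, hp.2]
  obtain ⟨t, ht0, ht⟩ : ∃ t, 0 < t ∧ Φ t < 1 := by
    have hs := hd.tendsto_slope_zero_right
    have he := (hs.eventually (gt_mem_nhds hneg)).and self_mem_nhdsWithin
    obtain ⟨t, h1, h2⟩ := he.exists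
    have h2' : (0 : ℝ) < t := h2
    refine ⟨t, h2', ?_⟩
    have h3 : t⁻¹ * (Φ t - 1) < 0 := by simpa [h0] using h1
    have h4 : Φ t - 1 < 0 := by
      by_contra! h5
      exact absurd h3 (not_lt.mpr (by positivity))
    linarith
  refine ⟨Φ t, Finset.sum_nonneg fun z _ => mul_nonneg (hp.1 z) (Real.exp_pos _).le, ht,
    fun n => ?_⟩
  have hpow : Φ t ^ n = ∑ z : Fin n → Ω, ∏ i, (p (z i) * Real.exp (t * L (z i))) := by
    rw [sum_prod_codebook (fun (_ : Fin n) z => p z * Real.exp (t * L z))]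
    simp [hΦ]
  rw [hpow]
  refine Finset.sum_le_sum fun z _ => ?_
  rw [Finset.prod_mul_distrib]
  by_cases hz : ∏ i, p (z i) = 0
  · simp [hz]
  have hpos : ∀ i, 0 < p (z i) := fun i => lt_of_le_of_ne (hp.1 _) fun h =>
    hz (Finset.prod_eq_zero (Finset.mem_univ i) h.symm)
  refine mul_le_mul_of_nonneg_left ?_ (Finset.prod_nonneg fun i _ => hp.1 _)
  split_ifs with hle
  · rw [← Real.exp_sum, ← Finset.mul_sum]
    refine Real.one_le_exp (mul_nonneg ht0.le ?_)
    have hlog := Real.log_le_log (Finset.prod_pos fun i _ => hpos i) hle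
    rw [Real.log_mul (Real.exp_pos _).ne'
      (Finset.prod_pos fun i _ => hpr _ (hpos i)).ne', Real.log_exp,
      Real.log_prod (fun i _ => (hpos i).ne'),
      Real.log_prod (fun i _ => (hpr _ (hpos i)).ne')] at hlog
    simp only [hL, Finset.sum_sub_distrib, Finset.sum_const, Finset.card_univ, Fintype.card_fin,
      nsmul_eq_mul]
    linarith
  · exact Finset.prod_nonneg fun i _ => (Real.exp_pos _).le

/-- The joint pmf `p(q) p(a,b,w) p(x₁|q,a) p(x₂|q,b) p(y|x₁,x₂)`. -/
def jointPmf {A B W X Z Y Q : Type} (pq : Q → ℝ) (pS : A → B → W → ℝ) (k₁ : Q → A → X → ℝ)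
    (k₂ : Q → B → Z → ℝ) (ch : X → Z → Y → ℝ)
    (a : A) (b : B) (w : W) (y : Y) (q : Q) (x : X) (z : Z) : ℝ :=
  pq q * pS a b w * k₁ q a x * k₂ q b z * ch x z y

/-- The probability of a superposition codebook: a cloud centre for every value of the common
part, and a codeword for every value of each source drawn given its cloud centre. -/
def codebookWeight {A B X Z Q U : Type} [Fintype A] [Fintype B] [Fintype U]
    (pq : Q → ℝ) (k₁ : Q → A → X → ℝ) (k₂ : Q → B → Z → ℝ) (u₁ : A → U) (u₂ : B → U)
    (i : (U → Q) × (A → X) × (B → Z)) : ℝ :=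
  (∏ u, pq (i.1 u)) *
    ((∏ a, k₁ (i.1 (u₁ a)) a (i.2.1 a)) * ∏ b, k₂ (i.1 (u₂ b)) b (i.2.2 b))

section Codebook

variable {A B X Z Q U : Type} [Fintype A] [Fintype B] [Fintype X] [Fintype Z]
  [Fintype Q] [Fintype U] {pq : Q → ℝ} {k₁ : Q → A → X → ℝ} {k₂ : Q → B → Z → ℝ}
  {u₁ : A → U} {u₂ : B → U}

theorem sum_codebookWeight_mul (H : (U → Q) → (A → X) → (B → Z) → ℝ) :
    ∑ i, codebookWeight pq k₁ k₂ u₁ u₂ i * H i.1 i.2.1 i.2.2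
      = ∑ c : U → Q, (∏ u, pq (c u)) * ∑ f : A → X, (∏ a, k₁ (c (u₁ a)) a (f a)) *
          ∑ g : B → Z, (∏ b, k₂ (c (u₂ b)) b (g b)) * H c f g := by
  simp only [Fintype.sum_prod_type, Finset.mul_sum, codebookWeight]
  refine Finset.sum_congr rfl fun c _ => Finset.sum_congr rfl fun f _ =>
    Finset.sum_congr rfl fun g _ => ?_
  ring

theorem codebookWeight_nonneg (hq : IsPmf pq) (h₁ : ∀ q a, IsPmf (k₁ q a))
    (h₂ : ∀ q b, IsPmf (k₂ q b)) (i : (U → Q) × (A → X) × (B → Z)) :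
    0 ≤ codebookWeight pq k₁ k₂ u₁ u₂ i :=
  mul_nonneg (Finset.prod_nonneg fun _ _ => hq.1 _)
    (mul_nonneg (Finset.prod_nonneg fun _ _ => (h₁ _ _).1 _)
      (Finset.prod_nonneg fun _ _ => (h₂ _ _).1 _))

theorem sum_codebookWeight (hq : IsPmf pq) (h₁ : ∀ q a, IsPmf (k₁ q a))
    (h₂ : ∀ q b, IsPmf (k₂ q b)) :
    ∑ i, codebookWeight pq k₁ k₂ u₁ u₂ i = 1 := by
  have h := sum_codebookWeight_mul (pq := pq) (k₁ := k₁) (k₂ := k₂) (u₁ := u₁) (u₂ := u₂)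
    (fun _ _ _ => 1)
  simp only [mul_one] at h
  rw [h]
  have e₁ : ∀ c : U → Q, ∑ f : A → X, ∏ a, k₁ (c (u₁ a)) a (f a) = 1 := fun c => by
    rw [sum_prod_codebook (fun a x => k₁ (c (u₁ a)) a x)]
    simp [(h₁ _ _).2]
  have e₂ : ∀ c : U → Q, ∑ g : B → Z, ∏ b, k₂ (c (u₂ b)) b (g b) = 1 := fun c => by
    rw [sum_prod_codebook (fun b x => k₂ (c (u₂ b)) b x)]
    simp [(h₂ _ _).2]
  simp_rw [e₂, mul_one, e₁, mul_one]
  rw [sum_prod_codebook (fun _ x => pq x)]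
  simp [hq.2]

variable (hq : IsPmf pq) (h₁ : ∀ q a, IsPmf (k₁ q a)) (h₂ : ∀ q b, IsPmf (k₂ q b))
include hq h₁ h₂

theorem expect_codeword_pair {a : A} {b : B} (hu : u₁ a = u₂ b) (F : Q → X → Z → ℝ) :
    ∑ i, codebookWeight pq k₁ k₂ u₁ u₂ i * F (i.1 (u₁ a)) (i.2.1 a) (i.2.2 b)
      = ∑ q, pq q * ∑ x, k₁ q a x * ∑ z, k₂ q b z * F q x z := by
  rw [sum_codebookWeight_mul (fun c f g => F (c (u₁ a)) (f a) (g b))]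
  have e₂ : ∀ (c : U → Q) (f : A → X), ∑ g : B → Z, (∏ b, k₂ (c (u₂ b)) b (g b)) *
      F (c (u₁ a)) (f a) (g b) = ∑ z, k₂ (c (u₁ a)) b z * F (c (u₁ a)) (f a) z := fun c f => by
    rw [sum_codebook_mul_apply (fun b z => k₂ (c (u₂ b)) b z) (fun b => (h₂ _ b).2) b
      (fun z => F (c (u₁ a)) (f a) z), hu]
  have e₁ : ∀ c : U → Q, ∑ f : A → X, (∏ a, k₁ (c (u₁ a)) a (f a)) *
      ∑ z, k₂ (c (u₁ a)) b z * F (c (u₁ a)) (f a) z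
      = ∑ x, k₁ (c (u₁ a)) a x * ∑ z, k₂ (c (u₁ a)) b z * F (c (u₁ a)) x z := fun c => by
    rw [sum_codebook_mul_apply (fun a x => k₁ (c (u₁ a)) a x) (fun a => (h₁ _ a).2) a
      (fun x => ∑ z, k₂ (c (u₁ a)) b z * F (c (u₁ a)) x z)]
  simp_rw [e₂, e₁]
  rw [sum_codebook_mul_apply (fun _ q => pq q) (fun _ => hq.2) (u₁ a)
    (fun q => ∑ x, k₁ q a x * ∑ z, k₂ q b z * F q x z)]

theorem expect_codeword_fst_ne {a a' : A} {b : B} (ha : a ≠ a') (hu : u₁ a = u₂ b)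
    (hu' : u₁ a' = u₂ b) (F : Q → X → X → Z → ℝ) :
    ∑ i, codebookWeight pq k₁ k₂ u₁ u₂ i * F (i.1 (u₁ a')) (i.2.1 a) (i.2.1 a') (i.2.2 b)
      = ∑ q, pq q * ∑ x, k₁ q a x * ∑ x', k₁ q a' x' * ∑ z, k₂ q b z * F q x x' z := by
  rw [sum_codebookWeight_mul (fun c f g => F (c (u₁ a')) (f a) (f a') (g b))]
  have e₂ : ∀ (c : U → Q) (f : A → X), ∑ g : B → Z, (∏ b, k₂ (c (u₂ b)) b (g b)) *
      F (c (u₁ a')) (f a) (f a') (g b)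
      = ∑ z, k₂ (c (u₂ b)) b z * F (c (u₂ b)) (f a) (f a') z := fun c f => by
    rw [sum_codebook_mul_apply (fun b z => k₂ (c (u₂ b)) b z) (fun b => (h₂ _ b).2) b
      (fun z => F (c (u₁ a')) (f a) (f a') z), hu']
  have e₁ : ∀ c : U → Q, ∑ f : A → X, (∏ a, k₁ (c (u₁ a)) a (f a)) *
      ∑ z, k₂ (c (u₂ b)) b z * F (c (u₂ b)) (f a) (f a') z
      = ∑ x, k₁ (c (u₂ b)) a x * ∑ x', k₁ (c (u₂ b)) a' x' *
        ∑ z, k₂ (c (u₂ b)) b z * F (c (u₂ b)) x x' z := fun c => by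
    rw [sum_codebook_mul_apply₂ (fun a x => k₁ (c (u₁ a)) a x) (fun a => (h₁ _ a).2) ha
      (fun x x' => ∑ z, k₂ (c (u₂ b)) b z * F (c (u₂ b)) x x' z), hu, hu']
  simp_rw [e₂, e₁]
  rw [sum_codebook_mul_apply (fun _ q => pq q) (fun _ => hq.2) (u₂ b)
    (fun q => ∑ x, k₁ q a x * ∑ x', k₁ q a' x' * ∑ z, k₂ q b z * F q x x' z)]

theorem expect_codeword_snd_ne {a : A} {b b' : B} (hb : b ≠ b') (hu : u₁ a = u₂ b)
    (hu' : u₁ a = u₂ b') (F : Q → X → Z → Z → ℝ) :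
    ∑ i, codebookWeight pq k₁ k₂ u₁ u₂ i * F (i.1 (u₁ a)) (i.2.1 a) (i.2.2 b) (i.2.2 b')
      = ∑ q, pq q * ∑ x, k₁ q a x * ∑ z, k₂ q b z * ∑ z', k₂ q b' z' * F q x z z' := by
  rw [sum_codebookWeight_mul (fun c f g => F (c (u₁ a)) (f a) (g b) (g b'))]
  have e₂ : ∀ (c : U → Q) (f : A → X), ∑ g : B → Z, (∏ b, k₂ (c (u₂ b)) b (g b)) *
      F (c (u₁ a)) (f a) (g b) (g b')
      = ∑ z, k₂ (c (u₁ a)) b z * ∑ z', k₂ (c (u₁ a)) b' z' * F (c (u₁ a)) (f a) z z' :=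
    fun c f => by
    rw [sum_codebook_mul_apply₂ (fun b z => k₂ (c (u₂ b)) b z) (fun b => (h₂ _ b).2) hb
      (fun z z' => F (c (u₁ a)) (f a) z z'), ← hu, ← hu']
  have e₁ : ∀ c : U → Q, ∑ f : A → X, (∏ a, k₁ (c (u₁ a)) a (f a)) *
      ∑ z, k₂ (c (u₁ a)) b z * ∑ z', k₂ (c (u₁ a)) b' z' * F (c (u₁ a)) (f a) z z'
      = ∑ x, k₁ (c (u₁ a)) a x * ∑ z, k₂ (c (u₁ a)) b z *
        ∑ z', k₂ (c (u₁ a)) b' z' * F (c (u₁ a)) x z z' := fun c => by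
    rw [sum_codebook_mul_apply (fun a x => k₁ (c (u₁ a)) a x) (fun a => (h₁ _ a).2) a
      (fun x => ∑ z, k₂ (c (u₁ a)) b z * ∑ z', k₂ (c (u₁ a)) b' z' * F (c (u₁ a)) x z z')]
  simp_rw [e₂, e₁]
  rw [sum_codebook_mul_apply (fun _ q => pq q) (fun _ => hq.2) (u₁ a)
    (fun q => ∑ x, k₁ q a x * ∑ z, k₂ q b z * ∑ z', k₂ q b' z' * F q x z z')]

theorem expect_codeword_both_ne {a a' : A} {b b' : B} (ha : a ≠ a') (hb : b ≠ b')
    (hu : u₁ a = u₂ b) (hu' : u₁ a' = u₂ b') (huu : u₁ a' = u₁ a)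
    (F : Q → X → X → Z → Z → ℝ) :
    ∑ i, codebookWeight pq k₁ k₂ u₁ u₂ i *
        F (i.1 (u₁ a')) (i.2.1 a) (i.2.1 a') (i.2.2 b) (i.2.2 b')
      = ∑ q, pq q * ∑ x, k₁ q a x * ∑ x', k₁ q a' x' *
        ∑ z, k₂ q b z * ∑ z', k₂ q b' z' * F q x x' z z' := by
  rw [sum_codebookWeight_mul (fun c f g => F (c (u₁ a')) (f a) (f a') (g b) (g b'))]
  have e₂ : ∀ (c : U → Q) (f : A → X), ∑ g : B → Z, (∏ b, k₂ (c (u₂ b)) b (g b)) *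
      F (c (u₁ a')) (f a) (f a') (g b) (g b')
      = ∑ z, k₂ (c (u₁ a)) b z * ∑ z', k₂ (c (u₁ a)) b' z' *
        F (c (u₁ a)) (f a) (f a') z z' := fun c f => by
    rw [sum_codebook_mul_apply₂ (fun b z => k₂ (c (u₂ b)) b z) (fun b => (h₂ _ b).2) hb
      (fun z z' => F (c (u₁ a')) (f a) (f a') z z'), ← hu, ← hu', huu]
  have e₁ : ∀ c : U → Q, ∑ f : A → X, (∏ a, k₁ (c (u₁ a)) a (f a)) *
      ∑ z, k₂ (c (u₁ a)) b z * ∑ z', k₂ (c (u₁ a)) b' z' * F (c (u₁ a)) (f a) (f a') z z'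
      = ∑ x, k₁ (c (u₁ a)) a x * ∑ x', k₁ (c (u₁ a)) a' x' * ∑ z, k₂ (c (u₁ a)) b z *
        ∑ z', k₂ (c (u₁ a)) b' z' * F (c (u₁ a)) x x' z z' := fun c => by
    rw [sum_codebook_mul_apply₂ (fun a x => k₁ (c (u₁ a)) a x) (fun a => (h₁ _ a).2) ha
      (fun x x' => ∑ z, k₂ (c (u₁ a)) b z * ∑ z', k₂ (c (u₁ a)) b' z' *
        F (c (u₁ a)) x x' z z'), huu]
  simp_rw [e₂, e₁]
  rw [sum_codebook_mul_apply (fun _ q => pq q) (fun _ => hq.2) (u₁ a)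
    (fun q => ∑ x, k₁ q a x * ∑ x', k₁ q a' x' *
        ∑ z, k₂ q b z * ∑ z', k₂ q b' z' * F q x x' z z')]

theorem expect_codeword_common_ne {a a' : A} {b b' : B}
    (hu : u₁ a = u₂ b) (hu' : u₁ a' = u₂ b') (huu : u₁ a ≠ u₁ a')
    (F : Q → X → X → Z → Z → ℝ) :
    ∑ i, codebookWeight pq k₁ k₂ u₁ u₂ i *
        F (i.1 (u₁ a')) (i.2.1 a) (i.2.1 a') (i.2.2 b) (i.2.2 b')
      = ∑ q, pq q * ∑ q', pq q' * ∑ x, k₁ q a x * ∑ x', k₁ q' a' x' *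
        ∑ z, k₂ q b z * ∑ z', k₂ q' b' z' * F q' x x' z z' := by
  have ha : a ≠ a' := fun h => huu (h ▸ rfl)
  have hb : b ≠ b' := fun h => huu (by rw [hu, hu', h])
  rw [sum_codebookWeight_mul (fun c f g => F (c (u₁ a')) (f a) (f a') (g b) (g b'))]
  have e₂ : ∀ (c : U → Q) (f : A → X), ∑ g : B → Z, (∏ b, k₂ (c (u₂ b)) b (g b)) *
      F (c (u₁ a')) (f a) (f a') (g b) (g b')
      = ∑ z, k₂ (c (u₁ a)) b z * ∑ z', k₂ (c (u₁ a')) b' z' *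
        F (c (u₁ a')) (f a) (f a') z z' := fun c f => by
    rw [sum_codebook_mul_apply₂ (fun b z => k₂ (c (u₂ b)) b z) (fun b => (h₂ _ b).2) hb
      (fun z z' => F (c (u₁ a')) (f a) (f a') z z'), ← hu, ← hu']
  have e₁ : ∀ c : U → Q, ∑ f : A → X, (∏ a, k₁ (c (u₁ a)) a (f a)) *
      ∑ z, k₂ (c (u₁ a)) b z * ∑ z', k₂ (c (u₁ a')) b' z' * F (c (u₁ a')) (f a) (f a') z z'
      = ∑ x, k₁ (c (u₁ a)) a x * ∑ x', k₁ (c (u₁ a')) a' x' * ∑ z, k₂ (c (u₁ a)) b z *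
        ∑ z', k₂ (c (u₁ a')) b' z' * F (c (u₁ a')) x x' z z' := fun c => by
    rw [sum_codebook_mul_apply₂ (fun a x => k₁ (c (u₁ a)) a x) (fun a => (h₁ _ a).2) ha
      (fun x x' => ∑ z, k₂ (c (u₁ a)) b z * ∑ z', k₂ (c (u₁ a')) b' z' *
        F (c (u₁ a')) x x' z z')]
  simp_rw [e₂, e₁]
  rw [sum_codebook_mul_apply₂ (fun _ q => pq q) (fun _ => hq.2) huu
    (fun q q' => ∑ x, k₁ q a x * ∑ x', k₁ q' a' x' *
        ∑ z, k₂ q b z * ∑ z', k₂ q' b' z' * F q' x x' z z')]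

end Codebook

section Packing

variable {A B W X Z Y Q U : Type} [Fintype A] [Fintype B] [Fintype W] [Fintype X] [Fintype Z]
  [Fintype Y] [Fintype Q] {pq : Q → ℝ} {pS : A → B → W → ℝ} {k₁ : Q → A → X → ℝ}
  {k₂ : Q → B → Z → ℝ} {ch : X → Z → Y → ℝ}

omit [Fintype A] [Fintype B] [Fintype W] in
theorem jointPmf_nonneg (hS : ∀ a b w, 0 ≤ pS a b w)
    (hq : IsPmf pq) (h₁ : ∀ q a, IsPmf (k₁ q a)) (h₂ : ∀ q b, IsPmf (k₂ q b))
    (hch : ∀ x z, IsPmf (ch x z)) (a : A) (b : B) (w : W) (y : Y) (q : Q) (x : X) (z : Z) :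
    0 ≤ jointPmf pq pS k₁ k₂ ch a b w y q x z :=
  mul_nonneg (mul_nonneg (mul_nonneg (mul_nonneg (hq.1 _) (hS _ _ _)) ((h₁ _ _).1 _))
    ((h₂ _ _).1 _)) ((hch _ _).1 _)

theorem sum_jointPmf (hS : ∑ a, ∑ b, ∑ w, pS a b w = 1)
    (hq : IsPmf pq) (h₁ : ∀ q a, IsPmf (k₁ q a)) (h₂ : ∀ q b, IsPmf (k₂ q b))
    (hch : ∀ x z, IsPmf (ch x z)) :
    ∑ v : A × B × W × Q × X × Z × Y, jointPmf pq pS k₁ k₂ ch v.1 v.2.1 v.2.2.1 v.2.2.2.2.2.2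
      v.2.2.2.1 v.2.2.2.2.1 v.2.2.2.2.2.1 = 1 := by
  simp only [Fintype.sum_prod_type, jointPmf, ← Finset.mul_sum, (hch _ _).2, (h₁ _ _).2,
    (h₂ _ _).2, mul_one, ← Finset.sum_mul, hq.2, one_mul, hS]

theorem packing_fst (t : A → B → W → Y → Q → X → Z → ℝ) (hS : ∑ a, ∑ b, ∑ w, pS a b w = 1)
    (hq : IsPmf pq) (h₁ : ∀ q a, IsPmf (k₁ q a)) (h₂ : ∀ q b, IsPmf (k₂ q b))
    (hch : ∀ x z, IsPmf (ch x z)) {G : ℝ} (hG : 0 < G)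
    (ht : ∀ a b w y q x z, G * ((∑ a', ∑ x', jointPmf pq pS k₁ k₂ ch a' b w y q x' z) *
      k₁ q a x) * t a b w y q x z ≤ jointPmf pq pS k₁ k₂ ch a b w y q x z) :
    ∑ a, ∑ b, ∑ w, ∑ y, pS a b w * (∑ a', ∑ q, pq q * ∑ x, k₁ q a x * ∑ x', k₁ q a' x' *
      ∑ z, k₂ q b z * (ch x z y * t a' b w y q x' z)) ≤ 1 / G := by
  calc _ = ∑ v : A × B × W × Y × A × Q × X × X × Z,
        pS v.1 v.2.1 v.2.2.1 * (pq v.2.2.2.2.2.1 * (k₁ v.2.2.2.2.2.1 v.1 v.2.2.2.2.2.2.1 *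
        (k₁ v.2.2.2.2.2.1 v.2.2.2.2.1 v.2.2.2.2.2.2.2.1 *
        (k₂ v.2.2.2.2.2.1 v.2.1 v.2.2.2.2.2.2.2.2 *
        (ch v.2.2.2.2.2.2.1 v.2.2.2.2.2.2.2.2 v.2.2.2.1 *
        t v.2.2.2.2.1 v.2.1 v.2.2.1 v.2.2.2.1 v.2.2.2.2.2.1 v.2.2.2.2.2.2.2.1
          v.2.2.2.2.2.2.2.2))))) := by
        simp only [Fintype.sum_prod_type, Finset.mul_sum]
    _ = ∑ v : (A × B × W × Q × X × Z × Y) × (A × X),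
        jointPmf pq pS k₁ k₂ ch v.2.1 v.1.2.1 v.1.2.2.1 v.1.2.2.2.2.2.2 v.1.2.2.2.1 v.2.2
          v.1.2.2.2.2.2.1 * (k₁ v.1.2.2.2.1 v.1.1 v.1.2.2.2.2.1 *
          t v.1.1 v.1.2.1 v.1.2.2.1 v.1.2.2.2.2.2.2 v.1.2.2.2.1 v.1.2.2.2.2.1
          v.1.2.2.2.2.2.1) :=
        Fintype.sum_equiv ⟨fun ⟨a, b, w, y, a', q, x, x', z⟩ => ((a', b, w, q, x', z, y), (a, x)),
          fun ⟨(a', b, w, q, x', z, y), (a, x)⟩ => ⟨a, b, w, y, a', q, x, x', z⟩,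
          fun _ => rfl, fun _ => rfl⟩ _ _ fun _ => by
            simp only [jointPmf, Equiv.coe_fn_mk]; ring
    _ = ∑ v : A × B × W × Q × X × Z × Y, ((∑ a', ∑ x', jointPmf pq pS k₁ k₂ ch a' v.2.1 v.2.2.1
          v.2.2.2.2.2.2 v.2.2.2.1 x' v.2.2.2.2.2.1) * k₁ v.2.2.2.1 v.1 v.2.2.2.2.1) *
          t v.1 v.2.1 v.2.2.1 v.2.2.2.2.2.2 v.2.2.2.1 v.2.2.2.2.1 v.2.2.2.2.2.1 := by
        rw [Fintype.sum_prod_type]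
        refine Finset.sum_congr rfl fun v _ => ?_
        simp only [Fintype.sum_prod_type, Finset.sum_mul, mul_assoc]
    _ ≤ ∑ v : A × B × W × Q × X × Z × Y, jointPmf pq pS k₁ k₂ ch v.1 v.2.1 v.2.2.1
          v.2.2.2.2.2.2 v.2.2.2.1 v.2.2.2.2.1 v.2.2.2.2.2.1 / G := by
        refine Finset.sum_le_sum fun v _ => ?_
        rw [le_div_iff₀ hG]
        refine le_trans (le_of_eq ?_) (ht _ _ _ _ _ _ _)
        ring
    _ = 1 / G := by rw [← Finset.sum_div, sum_jointPmf hS hq h₁ h₂ hch]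

theorem packing_snd (t : A → B → W → Y → Q → X → Z → ℝ) (hS : ∑ a, ∑ b, ∑ w, pS a b w = 1)
    (hq : IsPmf pq) (h₁ : ∀ q a, IsPmf (k₁ q a)) (h₂ : ∀ q b, IsPmf (k₂ q b))
    (hch : ∀ x z, IsPmf (ch x z)) {G : ℝ} (hG : 0 < G)
    (ht : ∀ a b w y q x z, G * ((∑ b', ∑ z', jointPmf pq pS k₁ k₂ ch a b' w y q x z') *
      k₂ q b z) * t a b w y q x z ≤ jointPmf pq pS k₁ k₂ ch a b w y q x z) :
    ∑ a, ∑ b, ∑ w, ∑ y, pS a b w * (∑ b', ∑ q, pq q * ∑ x, k₁ q a x * ∑ z, k₂ q b z *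
      ∑ z', k₂ q b' z' * (ch x z y * t a b' w y q x z')) ≤ 1 / G := by
  calc _ = ∑ v : A × B × W × Y × B × Q × X × Z × Z,
        pS v.1 v.2.1 v.2.2.1 * (pq v.2.2.2.2.2.1 * (k₁ v.2.2.2.2.2.1 v.1 v.2.2.2.2.2.2.1 *
        (k₂ v.2.2.2.2.2.1 v.2.1 v.2.2.2.2.2.2.2.1 *
        (k₂ v.2.2.2.2.2.1 v.2.2.2.2.1 v.2.2.2.2.2.2.2.2 *
        (ch v.2.2.2.2.2.2.1 v.2.2.2.2.2.2.2.1 v.2.2.2.1 *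
        t v.1 v.2.2.2.2.1 v.2.2.1 v.2.2.2.1 v.2.2.2.2.2.1 v.2.2.2.2.2.2.1
          v.2.2.2.2.2.2.2.2))))) := by
        simp only [Fintype.sum_prod_type, Finset.mul_sum]
    _ = ∑ v : (A × B × W × Q × X × Z × Y) × (B × Z),
        jointPmf pq pS k₁ k₂ ch v.1.1 v.2.1 v.1.2.2.1 v.1.2.2.2.2.2.2 v.1.2.2.2.1 v.1.2.2.2.2.1
          v.2.2 * (k₂ v.1.2.2.2.1 v.1.2.1 v.1.2.2.2.2.2.1 *
          t v.1.1 v.1.2.1 v.1.2.2.1 v.1.2.2.2.2.2.2 v.1.2.2.2.1 v.1.2.2.2.2.1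
          v.1.2.2.2.2.2.1) :=
        Fintype.sum_equiv ⟨fun ⟨a, b, w, y, b', q, x, z, z'⟩ => ((a, b', w, q, x, z', y), (b, z)),
          fun ⟨(a, b', w, q, x, z', y), (b, z)⟩ => ⟨a, b, w, y, b', q, x, z, z'⟩,
          fun _ => rfl, fun _ => rfl⟩ _ _ fun _ => by
            simp only [jointPmf, Equiv.coe_fn_mk]; ring
    _ = ∑ v : A × B × W × Q × X × Z × Y, ((∑ b', ∑ z', jointPmf pq pS k₁ k₂ ch v.1 b' v.2.2.1
          v.2.2.2.2.2.2 v.2.2.2.1 v.2.2.2.2.1 z') * k₂ v.2.2.2.1 v.2.1 v.2.2.2.2.2.1) *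
          t v.1 v.2.1 v.2.2.1 v.2.2.2.2.2.2 v.2.2.2.1 v.2.2.2.2.1 v.2.2.2.2.2.1 := by
        rw [Fintype.sum_prod_type]
        refine Finset.sum_congr rfl fun v _ => ?_
        simp only [Fintype.sum_prod_type, Finset.sum_mul, mul_assoc]
    _ ≤ ∑ v : A × B × W × Q × X × Z × Y, jointPmf pq pS k₁ k₂ ch v.1 v.2.1 v.2.2.1
          v.2.2.2.2.2.2 v.2.2.2.1 v.2.2.2.2.1 v.2.2.2.2.2.1 / G := by
        refine Finset.sum_le_sum fun v _ => ?_
        rw [le_div_iff₀ hG]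
        refine le_trans (le_of_eq ?_) (ht _ _ _ _ _ _ _)
        ring
    _ = 1 / G := by rw [← Finset.sum_div, sum_jointPmf hS hq h₁ h₂ hch]

theorem packing_both (u₁ : A → U) (t : A → B → W → Y → Q → X → Z → ℝ)
    (hS : ∑ a, ∑ b, ∑ w, pS a b w = 1)
    (hq : IsPmf pq) (h₁ : ∀ q a, IsPmf (k₁ q a)) (h₂ : ∀ q b, IsPmf (k₂ q b))
    (hch : ∀ x z, IsPmf (ch x z)) {G : ℝ} (hG : 0 < G)
    (ht : ∀ a b w y q x z, G * ((∑ a', ∑ b', ∑ x', ∑ z', if u₁ a' = u₁ a then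
      jointPmf pq pS k₁ k₂ ch a' b' w y q x' z' else 0) * (k₁ q a x * k₂ q b z)) *
      t a b w y q x z ≤ jointPmf pq pS k₁ k₂ ch a b w y q x z) :
    ∑ a, ∑ b, ∑ w, ∑ y, pS a b w * (∑ a', ∑ b', (if u₁ a = u₁ a' then 1 else 0) *
      ∑ q, pq q * ∑ x, k₁ q a x * ∑ x', k₁ q a' x' * ∑ z, k₂ q b z * ∑ z', k₂ q b' z' *
        (ch x z y * t a' b' w y q x' z')) ≤ 1 / G := by
  calc _ = ∑ v : A × B × W × Y × A × B × Q × X × X × Z × Z,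
        pS v.1 v.2.1 v.2.2.1 * ((if u₁ v.1 = u₁ v.2.2.2.2.1 then 1 else 0) *
        (pq v.2.2.2.2.2.2.1 * (k₁ v.2.2.2.2.2.2.1 v.1 v.2.2.2.2.2.2.2.1 *
        (k₁ v.2.2.2.2.2.2.1 v.2.2.2.2.1 v.2.2.2.2.2.2.2.2.1 *
        (k₂ v.2.2.2.2.2.2.1 v.2.1 v.2.2.2.2.2.2.2.2.2.1 *
        (k₂ v.2.2.2.2.2.2.1 v.2.2.2.2.2.1 v.2.2.2.2.2.2.2.2.2.2 *
        (ch v.2.2.2.2.2.2.2.1 v.2.2.2.2.2.2.2.2.2.1 v.2.2.2.1 *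
        t v.2.2.2.2.1 v.2.2.2.2.2.1 v.2.2.1 v.2.2.2.1 v.2.2.2.2.2.2.1
          v.2.2.2.2.2.2.2.2.1 v.2.2.2.2.2.2.2.2.2.2))))))) := by
        simp only [Finset.mul_sum]
        simp only [Fintype.sum_prod_type]
    _ = ∑ v : (A × B × W × Q × X × Z × Y) × (A × B × X × Z),
        (if u₁ v.2.1 = u₁ v.1.1 then
          jointPmf pq pS k₁ k₂ ch v.2.1 v.2.2.1 v.1.2.2.1 v.1.2.2.2.2.2.2 v.1.2.2.2.1 v.2.2.2.1
          v.2.2.2.2 else 0) * (k₁ v.1.2.2.2.1 v.1.1 v.1.2.2.2.2.1 *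
          (k₂ v.1.2.2.2.1 v.1.2.1 v.1.2.2.2.2.2.1 *
          t v.1.1 v.1.2.1 v.1.2.2.1 v.1.2.2.2.2.2.2 v.1.2.2.2.1 v.1.2.2.2.2.1
          v.1.2.2.2.2.2.1)) :=
        Fintype.sum_equiv ⟨fun ⟨a, b, w, y, a', b', q, x, x', z, z'⟩ =>
            ((a', b', w, q, x', z', y), (a, b, x, z)),
          fun ⟨(a', b', w, q, x', z', y), (a, b, x, z)⟩ => ⟨a, b, w, y, a', b', q, x, x', z, z'⟩,
          fun _ => rfl, fun _ => rfl⟩ _ _ fun _ => by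
            simp only [jointPmf, Equiv.coe_fn_mk]; split_ifs <;> ring
    _ = ∑ v : A × B × W × Q × X × Z × Y, ((∑ a', ∑ b', ∑ x', ∑ z', if u₁ a' = u₁ v.1 then
          jointPmf pq pS k₁ k₂ ch a' b' v.2.2.1 v.2.2.2.2.2.2 v.2.2.2.1 x' z' else 0) *
          (k₁ v.2.2.2.1 v.1 v.2.2.2.2.1 * k₂ v.2.2.2.1 v.2.1 v.2.2.2.2.2.1)) *
          t v.1 v.2.1 v.2.2.1 v.2.2.2.2.2.2 v.2.2.2.1 v.2.2.2.2.1 v.2.2.2.2.2.1 := by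
        rw [Fintype.sum_prod_type]
        refine Finset.sum_congr rfl fun v _ => ?_
        simp only [Fintype.sum_prod_type, Finset.sum_mul, mul_assoc]
    _ ≤ ∑ v : A × B × W × Q × X × Z × Y, jointPmf pq pS k₁ k₂ ch v.1 v.2.1 v.2.2.1
          v.2.2.2.2.2.2 v.2.2.2.1 v.2.2.2.2.1 v.2.2.2.2.2.1 / G := by
        refine Finset.sum_le_sum fun v _ => ?_
        rw [le_div_iff₀ hG]
        refine le_trans (le_of_eq ?_) (ht _ _ _ _ _ _ _)
        ring
    _ = 1 / G := by rw [← Finset.sum_div, sum_jointPmf hS hq h₁ h₂ hch]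

theorem packing_common (t : A → B → W → Y → Q → X → Z → ℝ)
    (hS : ∑ a, ∑ b, ∑ w, pS a b w = 1)
    (hq : IsPmf pq) (h₁ : ∀ q a, IsPmf (k₁ q a)) (h₂ : ∀ q b, IsPmf (k₂ q b))
    (hch : ∀ x z, IsPmf (ch x z)) {G : ℝ} (hG : 0 < G)
    (ht : ∀ a b w y q x z, G * ((∑ a', ∑ b', ∑ q', ∑ x', ∑ z',
      jointPmf pq pS k₁ k₂ ch a' b' w y q' x' z') * (pq q * k₁ q a x * k₂ q b z)) *
      t a b w y q x z ≤ jointPmf pq pS k₁ k₂ ch a b w y q x z) :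
    ∑ a, ∑ b, ∑ w, ∑ y, pS a b w * (∑ a', ∑ b', ∑ q, pq q * ∑ q', pq q' *
      ∑ x, k₁ q a x * ∑ x', k₁ q' a' x' * ∑ z, k₂ q b z * ∑ z', k₂ q' b' z' *
        (ch x z y * t a' b' w y q' x' z')) ≤ 1 / G := by
  calc _ = ∑ v : A × B × W × Y × A × B × Q × Q × X × X × Z × Z,
        pS v.1 v.2.1 v.2.2.1 * (pq v.2.2.2.2.2.2.1 * (pq v.2.2.2.2.2.2.2.1 *
        (k₁ v.2.2.2.2.2.2.1 v.1 v.2.2.2.2.2.2.2.2.1 *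
        (k₁ v.2.2.2.2.2.2.2.1 v.2.2.2.2.1 v.2.2.2.2.2.2.2.2.2.1 *
        (k₂ v.2.2.2.2.2.2.1 v.2.1 v.2.2.2.2.2.2.2.2.2.2.1 *
        (k₂ v.2.2.2.2.2.2.2.1 v.2.2.2.2.2.1 v.2.2.2.2.2.2.2.2.2.2.2 *
        (ch v.2.2.2.2.2.2.2.2.1 v.2.2.2.2.2.2.2.2.2.2.1 v.2.2.2.1 *
        t v.2.2.2.2.1 v.2.2.2.2.2.1 v.2.2.1 v.2.2.2.1 v.2.2.2.2.2.2.2.1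
          v.2.2.2.2.2.2.2.2.2.1 v.2.2.2.2.2.2.2.2.2.2.2))))))) := by
        simp (maxSteps := 1000000) only [Finset.mul_sum]
        simp (maxSteps := 1000000) only [Fintype.sum_prod_type]
    _ = ∑ v : (A × B × W × Q × X × Z × Y) × (A × B × Q × X × Z),
          jointPmf pq pS k₁ k₂ ch v.2.1 v.2.2.1 v.1.2.2.1 v.1.2.2.2.2.2.2 v.2.2.2.1 v.2.2.2.2.1
          v.2.2.2.2.2 * (pq v.1.2.2.2.1 * (k₁ v.1.2.2.2.1 v.1.1 v.1.2.2.2.2.1 *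
          (k₂ v.1.2.2.2.1 v.1.2.1 v.1.2.2.2.2.2.1 *
          t v.1.1 v.1.2.1 v.1.2.2.1 v.1.2.2.2.2.2.2 v.1.2.2.2.1 v.1.2.2.2.2.1
          v.1.2.2.2.2.2.1))) :=
        Fintype.sum_equiv ⟨fun ⟨a, b, w, y, a', b', q, q', x, x', z, z'⟩ =>
            ((a', b', w, q', x', z', y), (a, b, q, x, z)),
          fun ⟨(a', b', w, q', x', z', y), (a, b, q, x, z)⟩ =>
            ⟨a, b, w, y, a', b', q, q', x, x', z, z'⟩,
          fun _ => rfl, fun _ => rfl⟩ _ _ fun _ => by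
            simp only [jointPmf, Equiv.coe_fn_mk]; ring
    _ = ∑ v : A × B × W × Q × X × Z × Y, ((∑ a', ∑ b', ∑ q', ∑ x', ∑ z',
          jointPmf pq pS k₁ k₂ ch a' b' v.2.2.1 v.2.2.2.2.2.2 q' x' z') *
          (pq v.2.2.2.1 * k₁ v.2.2.2.1 v.1 v.2.2.2.2.1 * k₂ v.2.2.2.1 v.2.1 v.2.2.2.2.2.1)) *
          t v.1 v.2.1 v.2.2.1 v.2.2.2.2.2.2 v.2.2.2.1 v.2.2.2.2.1 v.2.2.2.2.2.1 := by
        rw [Fintype.sum_prod_type]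
        refine Finset.sum_congr rfl fun v _ => ?_
        simp only [Fintype.sum_prod_type, Finset.sum_mul, mul_assoc]
    _ ≤ ∑ v : A × B × W × Q × X × Z × Y, jointPmf pq pS k₁ k₂ ch v.1 v.2.1 v.2.2.1
          v.2.2.2.2.2.2 v.2.2.2.1 v.2.2.2.2.1 v.2.2.2.2.2.1 / G := by
        refine Finset.sum_le_sum fun v _ => ?_
        rw [le_div_iff₀ hG]
        refine le_trans (le_of_eq ?_) (ht _ _ _ _ _ _ _)
        ring
    _ = 1 / G := by rw [← Finset.sum_div, sum_jointPmf hS hq h₁ h₂ hch]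

end Packing

theorem decode_error_le {A B : Type} [Fintype A] [Fintype B] (τ : A → B → ℝ)
    (hτ : ∀ a b, τ a b = 0 ∨ τ a b = 1) (d : A × B)
    (hd : (∃ p : A × B, τ p.1 p.2 = 1) → τ d.1 d.2 = 1) (a : A) (b : B) :
    (if d = (a, b) then (0 : ℝ) else 1) ≤ (1 - τ a b) + (∑ a', if a ≠ a' then τ a' b else 0)
      + (∑ b', if b ≠ b' then τ a b' else 0)
      + ∑ a', ∑ b', if a ≠ a' ∧ b ≠ b' then τ a' b' else 0 := by
  have h0 : ∀ a b, 0 ≤ τ a b := fun a b => by rcases hτ a b with h | h <;> simp [h]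
  have hle : τ a b ≤ 1 := by rcases hτ a b with h | h <;> simp [h]
  have n1 : ∀ a', 0 ≤ (if a ≠ a' then τ a' b else 0) := fun a' => by
    split_ifs <;> simp [h0]
  have n2 : ∀ b', 0 ≤ (if b ≠ b' then τ a b' else 0) := fun b' => by
    split_ifs <;> simp [h0]
  have n3 : ∀ a' b', 0 ≤ (if a ≠ a' ∧ b ≠ b' then τ a' b' else 0) := fun a' b' => by
    split_ifs <;> simp [h0]
  have s1 := Finset.sum_nonneg fun a' (_ : a' ∈ Finset.univ) => n1 a'
  have s2 := Finset.sum_nonneg fun b' (_ : b' ∈ Finset.univ) => n2 b'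
  have s3 := Finset.sum_nonneg fun a' (_ : a' ∈ Finset.univ) =>
    Finset.sum_nonneg fun b' (_ : b' ∈ Finset.univ) => n3 a' b'
  split_ifs with hdab
  · linarith
  rcases hτ a b with hz | hz
  · linarith
  have hd1 : τ d.1 d.2 = 1 := hd ⟨(a, b), hz⟩
  by_cases ha : a = d.1
  · have hb : b ≠ d.2 := fun hb => hdab (by rw [ha, hb])
    have := Finset.single_le_sum (fun b' _ => n2 b') (Finset.mem_univ d.2)
    rw [if_pos hb, ha, hd1, ← ha] at this
    linarith
  · by_cases hb : b = d.2
    · have := Finset.single_le_sum (fun a' _ => n1 a') (Finset.mem_univ d.1)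
      rw [if_pos ha, hb, hd1, ← hb] at this
      linarith
    · have h1 := Finset.single_le_sum (fun b' _ => n3 d.1 b') (Finset.mem_univ d.2)
      have h2 := Finset.single_le_sum
        (fun a' _ => Finset.sum_nonneg fun b' (_ : b' ∈ Finset.univ) => n3 a' b')
        (Finset.mem_univ d.1)
      rw [if_pos ⟨ha, hb⟩, hd1] at h1
      linarith

theorem sum_mul_add₅ {A B W Y : Type} [Fintype A] [Fintype B] [Fintype W] [Fintype Y]
    (c : A → B → W → ℝ) (J₀ J₁ J₂ J₃ J₄ : A → B → W → Y → ℝ) :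
    ∑ a, ∑ b, ∑ w, ∑ y, c a b w *
      (J₀ a b w y + J₁ a b w y + J₂ a b w y + J₃ a b w y + J₄ a b w y)
    = (∑ a, ∑ b, ∑ w, ∑ y, c a b w * J₀ a b w y) + (∑ a, ∑ b, ∑ w, ∑ y, c a b w * J₁ a b w y)
      + (∑ a, ∑ b, ∑ w, ∑ y, c a b w * J₂ a b w y) + (∑ a, ∑ b, ∑ w, ∑ y, c a b w * J₃ a b w y)
      + ∑ a, ∑ b, ∑ w, ∑ y, c a b w * J₄ a b w y := by
  simp only [mul_add, Finset.sum_add_distrib]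

section OneShot

variable {A B W X Z Y Q U : Type} [Fintype A] [Fintype B] [Fintype W] [Fintype X] [Fintype Z]
  [Fintype Y] [Fintype Q] [Fintype U] {pq : Q → ℝ} {pS : A → B → W → ℝ} {k₁ : Q → A → X → ℝ}
  {k₂ : Q → B → Z → ℝ} {ch : X → Z → Y → ℝ} {u₁ : A → U} {u₂ : B → U}

omit [Fintype W] in
theorem expect_decode_bound_le (t : A → B → W → Y → Q → X → Z → ℝ)
    (hq : IsPmf pq) (h₁ : ∀ q a, IsPmf (k₁ q a)) (h₂ : ∀ q b, IsPmf (k₂ q b))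
    (hch : ∀ x z, IsPmf (ch x z))
    (ht0 : ∀ a b w y q x z, 0 ≤ t a b w y q x z)
    (htu : ∀ a b w y q x z, t a b w y q x z ≠ 0 → u₁ a = u₂ b)
    (a : A) (b : B) (w : W) (y : Y) (hu : u₁ a = u₂ b) :
    ∑ i, codebookWeight pq k₁ k₂ u₁ u₂ i * (ch (i.2.1 a) (i.2.2 b) y *
      ((1 - t a b w y (i.1 (u₁ a)) (i.2.1 a) (i.2.2 b))
        + (∑ a', if a ≠ a' then t a' b w y (i.1 (u₁ a')) (i.2.1 a') (i.2.2 b) else 0)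
        + (∑ b', if b ≠ b' then t a b' w y (i.1 (u₁ a)) (i.2.1 a) (i.2.2 b') else 0)
        + ∑ a', ∑ b', if a ≠ a' ∧ b ≠ b' then
            t a' b' w y (i.1 (u₁ a')) (i.2.1 a') (i.2.2 b') else 0)) ≤
    (∑ q, pq q * ∑ x, k₁ q a x * ∑ z, k₂ q b z * (ch x z y * (1 - t a b w y q x z)))
    + (∑ a', ∑ q, pq q * ∑ x, k₁ q a x * ∑ x', k₁ q a' x' *
      ∑ z, k₂ q b z * (ch x z y * t a' b w y q x' z))
    + (∑ b', ∑ q, pq q * ∑ x, k₁ q a x * ∑ z, k₂ q b z *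
      ∑ z', k₂ q b' z' * (ch x z y * t a b' w y q x z'))
    + (∑ a', ∑ b', (if u₁ a = u₁ a' then 1 else 0) *
      ∑ q, pq q * ∑ x, k₁ q a x * ∑ x', k₁ q a' x' * ∑ z, k₂ q b z * ∑ z', k₂ q b' z' *
        (ch x z y * t a' b' w y q x' z'))
    + (∑ a', ∑ b', ∑ q, pq q * ∑ q', pq q' *
      ∑ x, k₁ q a x * ∑ x', k₁ q' a' x' * ∑ z, k₂ q b z * ∑ z', k₂ q' b' z' *
        (ch x z y * t a' b' w y q' x' z')) := by
  have hq0 := hq.1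
  have h₁0 := fun q a => (h₁ q a).1
  have h₂0 := fun q b => (h₂ q b).1
  have hch0 := fun x z => (hch x z).1
  have tz : ∀ {a' b'}, u₁ a' ≠ u₂ b' → ∀ w y q x z, t a' b' w y q x z = 0 :=
    fun h w y q x z => by_contra fun hne => h (htu _ _ _ _ _ _ _ hne)
  simp only [mul_add, Finset.sum_add_distrib]
  have p1 : ∀ a', 0 ≤ ∑ q, pq q * ∑ x, k₁ q a x * ∑ x', k₁ q a' x' *
      ∑ z, k₂ q b z * (ch x z y * t a' b w y q x' z) := fun a' =>
    Finset.sum_nonneg fun _ _ => mul_nonneg (hq0 _) <| Finset.sum_nonneg fun _ _ =>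
    mul_nonneg (h₁0 _ _ _) <| Finset.sum_nonneg fun _ _ => mul_nonneg (h₁0 _ _ _) <|
    Finset.sum_nonneg fun _ _ => mul_nonneg (h₂0 _ _ _) <| mul_nonneg (hch0 _ _ _) (ht0 _ _ _ _ _ _ _)
  have p2 : ∀ b', 0 ≤ ∑ q, pq q * ∑ x, k₁ q a x * ∑ z, k₂ q b z *
      ∑ z', k₂ q b' z' * (ch x z y * t a b' w y q x z') := fun b' =>
    Finset.sum_nonneg fun _ _ => mul_nonneg (hq0 _) <| Finset.sum_nonneg fun _ _ =>
    mul_nonneg (h₁0 _ _ _) <| Finset.sum_nonneg fun _ _ => mul_nonneg (h₂0 _ _ _) <|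
    Finset.sum_nonneg fun _ _ => mul_nonneg (h₂0 _ _ _) <| mul_nonneg (hch0 _ _ _) (ht0 _ _ _ _ _ _ _)
  have p3 : ∀ a' b', 0 ≤ ∑ q, pq q * ∑ x, k₁ q a x * ∑ x', k₁ q a' x' *
      ∑ z, k₂ q b z * ∑ z', k₂ q b' z' * (ch x z y * t a' b' w y q x' z') := fun a' b' =>
    Finset.sum_nonneg fun _ _ => mul_nonneg (hq0 _) <| Finset.sum_nonneg fun _ _ =>
    mul_nonneg (h₁0 _ _ _) <| Finset.sum_nonneg fun _ _ => mul_nonneg (h₁0 _ _ _) <|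
    Finset.sum_nonneg fun _ _ => mul_nonneg (h₂0 _ _ _) <| Finset.sum_nonneg fun _ _ =>
    mul_nonneg (h₂0 _ _ _) <| mul_nonneg (hch0 _ _ _) (ht0 _ _ _ _ _ _ _)
  have p4 : ∀ a' b', 0 ≤ ∑ q, pq q * ∑ q', pq q' * ∑ x, k₁ q a x * ∑ x', k₁ q' a' x' *
      ∑ z, k₂ q b z * ∑ z', k₂ q' b' z' * (ch x z y * t a' b' w y q' x' z') := fun a' b' =>
    Finset.sum_nonneg fun _ _ => mul_nonneg (hq0 _) <| Finset.sum_nonneg fun _ _ =>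
    mul_nonneg (hq0 _) <| Finset.sum_nonneg fun _ _ =>
    mul_nonneg (h₁0 _ _ _) <| Finset.sum_nonneg fun _ _ => mul_nonneg (h₁0 _ _ _) <|
    Finset.sum_nonneg fun _ _ => mul_nonneg (h₂0 _ _ _) <| Finset.sum_nonneg fun _ _ =>
    mul_nonneg (h₂0 _ _ _) <| mul_nonneg (hch0 _ _ _) (ht0 _ _ _ _ _ _ _)
  have e0 := expect_codeword_pair hq h₁ h₂ hu (fun q x z => ch x z y * (1 - t a b w y q x z))
  have e1 : ∑ i, codebookWeight pq k₁ k₂ u₁ u₂ i * (ch (i.2.1 a) (i.2.2 b) y *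
      ∑ a', if a ≠ a' then t a' b w y (i.1 (u₁ a')) (i.2.1 a') (i.2.2 b) else 0) ≤
      ∑ a', ∑ q, pq q * ∑ x, k₁ q a x * ∑ x', k₁ q a' x' *
      ∑ z, k₂ q b z * (ch x z y * t a' b w y q x' z) := by
    simp only [Finset.mul_sum (s := (Finset.univ : Finset A)) (f := fun a' => ite _ _ _),
      Finset.mul_sum (s := (Finset.univ : Finset A))
        (f := fun a' => ch _ _ _ * ite _ _ _)]
    rw [Finset.sum_comm]
    refine Finset.sum_le_sum fun a' _ => ?_
    by_cases ha : a = a'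
    · simpa [ha] using p1 a'
    by_cases hu' : u₁ a' = u₂ b
    · simp only [ne_eq, ha, not_false_eq_true, if_true]
      exact (expect_codeword_fst_ne hq h₁ h₂ ha hu hu'
        (fun q x x' z => ch x z y * t a' b w y q x' z)).le
    · simp [tz hu']
  have e2 : ∑ i, codebookWeight pq k₁ k₂ u₁ u₂ i * (ch (i.2.1 a) (i.2.2 b) y *
      ∑ b', if b ≠ b' then t a b' w y (i.1 (u₁ a)) (i.2.1 a) (i.2.2 b') else 0) ≤
      ∑ b', ∑ q, pq q * ∑ x, k₁ q a x * ∑ z, k₂ q b z *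
      ∑ z', k₂ q b' z' * (ch x z y * t a b' w y q x z') := by
    simp only [Finset.mul_sum (s := (Finset.univ : Finset B)) (f := fun b' => ite _ _ _),
      Finset.mul_sum (s := (Finset.univ : Finset B))
        (f := fun a' => ch _ _ _ * ite _ _ _)]
    rw [Finset.sum_comm]
    refine Finset.sum_le_sum fun b' _ => ?_
    by_cases hb : b = b'
    · simpa [hb] using p2 b'
    by_cases hu' : u₁ a = u₂ b'
    · simp only [ne_eq, hb, not_false_eq_true, if_true]
      exact (expect_codeword_snd_ne hq h₁ h₂ hb hu hu'
        (fun q x z z' => ch x z y * t a b' w y q x z')).le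
    · simp [tz hu']
  have e3 : ∑ i, codebookWeight pq k₁ k₂ u₁ u₂ i * (ch (i.2.1 a) (i.2.2 b) y *
      ∑ a', ∑ b', if a ≠ a' ∧ b ≠ b' then
            t a' b' w y (i.1 (u₁ a')) (i.2.1 a') (i.2.2 b') else 0) ≤
      (∑ a', ∑ b', (if u₁ a = u₁ a' then 1 else 0) *
        ∑ q, pq q * ∑ x, k₁ q a x * ∑ x', k₁ q a' x' * ∑ z, k₂ q b z * ∑ z', k₂ q b' z' *
        (ch x z y * t a' b' w y q x' z'))
      + (∑ a', ∑ b', ∑ q, pq q * ∑ q', pq q' *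
        ∑ x, k₁ q a x * ∑ x', k₁ q' a' x' * ∑ z, k₂ q b z * ∑ z', k₂ q' b' z' *
        (ch x z y * t a' b' w y q' x' z')) := by
    have hsw : ∑ i, codebookWeight pq k₁ k₂ u₁ u₂ i * (ch (i.2.1 a) (i.2.2 b) y *
      ∑ a', ∑ b', if a ≠ a' ∧ b ≠ b' then
            t a' b' w y (i.1 (u₁ a')) (i.2.1 a') (i.2.2 b') else 0) =
      ∑ a', ∑ b', ∑ i, codebookWeight pq k₁ k₂ u₁ u₂ i * (ch (i.2.1 a) (i.2.2 b) y *
       if a ≠ a' ∧ b ≠ b' then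
            t a' b' w y (i.1 (u₁ a')) (i.2.1 a') (i.2.2 b') else 0) := by
      simp only [Finset.mul_sum]
      rw [Finset.sum_comm]
      exact Finset.sum_congr rfl fun a' _ => Finset.sum_comm
    rw [hsw, ← Finset.sum_add_distrib]
    refine Finset.sum_le_sum fun a' _ => ?_
    rw [← Finset.sum_add_distrib]
    refine Finset.sum_le_sum fun b' _ => ?_
    have i3 : 0 ≤ (if u₁ a = u₁ a' then 1 else 0) *
        ∑ q, pq q * ∑ x, k₁ q a x * ∑ x', k₁ q a' x' * ∑ z, k₂ q b z * ∑ z', k₂ q b' z' *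
        (ch x z y * t a' b' w y q x' z') :=
      mul_nonneg (by split_ifs <;> norm_num) (p3 a' b')
    by_cases hab : a ≠ a' ∧ b ≠ b'
    · by_cases hu' : u₁ a' = u₂ b'
      · simp only [if_pos hab]
        by_cases huu : u₁ a = u₁ a'
        · rw [expect_codeword_both_ne hq h₁ h₂ hab.1 hab.2 hu hu' huu.symm
            (fun q x x' z z' => ch x z y * t a' b' w y q x' z'), if_pos huu, one_mul]
          exact le_add_of_nonneg_right (p4 a' b')
        · rw [expect_codeword_common_ne hq h₁ h₂ hu hu' huu
            (fun q x x' z z' => ch x z y * t a' b' w y q x' z')]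
          exact le_add_of_nonneg_left i3
      · simp [tz hu']
    · simp only [if_neg hab, mul_zero, Finset.sum_const_zero]
      exact add_nonneg i3 (p4 a' b')
  linarith

theorem exists_code (t : A → B → W → Y → Q → X → Z → ℝ)
    (hS0 : ∀ a b w, 0 ≤ pS a b w) (hS : ∑ a, ∑ b, ∑ w, pS a b w = 1)
    (hq : IsPmf pq) (h₁ : ∀ q a, IsPmf (k₁ q a)) (h₂ : ∀ q b, IsPmf (k₂ q b))
    (hch : ∀ x z, IsPmf (ch x z)) {G : ℝ} (hG : 0 < G)
    (hu : ∀ a b w, pS a b w ≠ 0 → u₁ a = u₂ b)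
    (ht01 : ∀ a b w y q x z, t a b w y q x z = 0 ∨ t a b w y q x z = 1)
    (htu : ∀ a b w y q x z, t a b w y q x z ≠ 0 → u₁ a = u₂ b)
    (ht1 : ∀ a b w y q x z, G * ((∑ a', ∑ x', jointPmf pq pS k₁ k₂ ch a' b w y q x' z) *
      k₁ q a x) * t a b w y q x z ≤ jointPmf pq pS k₁ k₂ ch a b w y q x z)
    (ht2 : ∀ a b w y q x z, G * ((∑ b', ∑ z', jointPmf pq pS k₁ k₂ ch a b' w y q x z') *
      k₂ q b z) * t a b w y q x z ≤ jointPmf pq pS k₁ k₂ ch a b w y q x z)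
    (ht3 : ∀ a b w y q x z, G * ((∑ a', ∑ b', ∑ x', ∑ z', if u₁ a' = u₁ a then
      jointPmf pq pS k₁ k₂ ch a' b' w y q x' z' else 0) * (k₁ q a x * k₂ q b z)) *
      t a b w y q x z ≤ jointPmf pq pS k₁ k₂ ch a b w y q x z)
    (ht4 : ∀ a b w y q x z, G * ((∑ a', ∑ b', ∑ q', ∑ x', ∑ z',
      jointPmf pq pS k₁ k₂ ch a' b' w y q' x' z') * (pq q * k₁ q a x * k₂ q b z)) *
      t a b w y q x z ≤ jointPmf pq pS k₁ k₂ ch a b w y q x z) :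
    ∃ (f : A → X) (g : B → Z) (d : Y → W → A × B),
      ∑ a, ∑ b, ∑ w, ∑ y, pS a b w * ch (f a) (g b) y * (if d y w = (a, b) then 0 else 1) ≤
      (∑ a, ∑ b, ∑ w, ∑ y, ∑ q, ∑ x, ∑ z,
        jointPmf pq pS k₁ k₂ ch a b w y q x z * (1 - t a b w y q x z)) + 4 / G := by
  have hne : Nonempty (A × B) := by
    by_contra hc
    rw [not_nonempty_iff, isEmpty_prod] at hc
    rcases hc with hc | hc <;> simp at hS
  let d : (U → Q) × (A → X) × (B → Z) → Y → W → A × B := fun i y w =>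
    Classical.epsilon fun p : A × B => t p.1 p.2 w y (i.1 (u₁ p.1)) (i.2.1 p.1) (i.2.2 p.2) = 1
  suffices h : ∃ i, ∑ a, ∑ b, ∑ w, ∑ y, pS a b w * ch (i.2.1 a) (i.2.2 b) y *
      (if d i y w = (a, b) then 0 else 1) ≤
      (∑ a, ∑ b, ∑ w, ∑ y, ∑ q, ∑ x, ∑ z,
        jointPmf pq pS k₁ k₂ ch a b w y q x z * (1 - t a b w y q x z)) + 4 / G by
    obtain ⟨i, hi⟩ := h
    exact ⟨i.2.1, i.2.2, d i, hi⟩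
  refine exists_le_of_sum_weight_mul_le (codebookWeight pq k₁ k₂ u₁ u₂) _ _
    (codebookWeight_nonneg hq h₁ h₂) (sum_codebookWeight hq h₁ h₂) ?_
  have ht0 : ∀ a b w y q x z, 0 ≤ t a b w y q x z := fun a b w y q x z => by
    rcases ht01 a b w y q x z with h | h <;> simp [h]
  have hswap : ∑ i, codebookWeight pq k₁ k₂ u₁ u₂ i * (∑ a, ∑ b, ∑ w, ∑ y, pS a b w *
      ch (i.2.1 a) (i.2.2 b) y * (if d i y w = (a, b) then 0 else 1)) =
      ∑ a, ∑ b, ∑ w, ∑ y, pS a b w * ∑ i, codebookWeight pq k₁ k₂ u₁ u₂ i *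
        (ch (i.2.1 a) (i.2.2 b) y * (if d i y w = (a, b) then 0 else 1)) := by
    simp only [Finset.mul_sum]
    rw [Finset.sum_comm]
    refine Finset.sum_congr rfl fun a _ => ?_
    rw [Finset.sum_comm]
    refine Finset.sum_congr rfl fun b _ => ?_
    rw [Finset.sum_comm]
    refine Finset.sum_congr rfl fun w _ => ?_
    rw [Finset.sum_comm]
    refine Finset.sum_congr rfl fun y _ => Finset.sum_congr rfl fun i _ => ?_
    ring
  rw [hswap]
  have hmul : ∀ {c r s : ℝ}, 0 ≤ c → (c ≠ 0 → r ≤ s) → c * r ≤ c * s := fun {c r s} hc h => by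
    by_cases h0 : c = 0
    · simp [h0]
    · exact mul_le_mul_of_nonneg_left (h h0) hc
  refine le_trans (Finset.sum_le_sum fun a _ => Finset.sum_le_sum fun b _ =>
    Finset.sum_le_sum fun w _ => Finset.sum_le_sum fun y _ => hmul (hS0 a b w) fun hne =>
      le_trans (Finset.sum_le_sum fun i _ => mul_le_mul_of_nonneg_left
        (mul_le_mul_of_nonneg_left (decode_error_le
          (fun a b => t a b w y (i.1 (u₁ a)) (i.2.1 a) (i.2.2 b)) (fun a b => ht01 _ _ _ _ _ _ _)
          (d i y w) (fun h => Classical.epsilon_spec h) a b) ((hch _ _).1 _))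
        (codebookWeight_nonneg hq h₁ h₂ i))
      (expect_decode_bound_le t hq h₁ h₂ hch ht0 htu a b w y (hu a b w hne))) ?_
  have b1 := packing_fst t hS hq h₁ h₂ hch hG ht1
  have b2 := packing_snd t hS hq h₁ h₂ hch hG ht2
  have b3 := packing_both u₁ t hS hq h₁ h₂ hch hG ht3
  have b4 := packing_common t hS hq h₁ h₂ hch hG ht4
  have b0 : ∑ a, ∑ b, ∑ w, ∑ y, pS a b w * (∑ q, pq q * ∑ x, k₁ q a x * ∑ z, k₂ q b z *
      (ch x z y * (1 - t a b w y q x z))) = ∑ a, ∑ b, ∑ w, ∑ y, ∑ q, ∑ x, ∑ z,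
        jointPmf pq pS k₁ k₂ ch a b w y q x z * (1 - t a b w y q x z) := by
    simp only [Finset.mul_sum, jointPmf]
    refine Finset.sum_congr rfl fun a _ => Finset.sum_congr rfl fun b _ =>
      Finset.sum_congr rfl fun w _ => Finset.sum_congr rfl fun y _ =>
      Finset.sum_congr rfl fun q _ => Finset.sum_congr rfl fun x _ =>
      Finset.sum_congr rfl fun z _ => ?_
    ring
  rw [sum_mul_add₅]
  have e4 : 4 / G = 1 / G + 1 / G + 1 / G + 1 / G := by ring
  linarith

end OneShot

section Block

variable {A B W X Z Y Q U : Type} [Fintype A] [Fintype B] [Fintype W] [Fintype X] [Fintype Z]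
  [Fintype Y] [Fintype Q] [Fintype U] {pq : Q → ℝ} {pS : A → B → W → ℝ} {k₁ : Q → A → X → ℝ}
  {k₂ : Q → B → Z → ℝ} {ch : X → Z → Y → ℝ} {u₁ : A → U} {u₂ : B → U}

/-- `jointPmf` as a function of a single tuple. -/
def jointTuple (pq : Q → ℝ) (pS : A → B → W → ℝ) (k₁ : Q → A → X → ℝ)
    (k₂ : Q → B → Z → ℝ) (ch : X → Z → Y → ℝ) (v : A × B × W × Y × Q × X × Z) : ℝ :=
  jointPmf pq pS k₁ k₂ ch v.1 v.2.1 v.2.2.1 v.2.2.2.1 v.2.2.2.2.1 v.2.2.2.2.2.1 v.2.2.2.2.2.2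

/-- Reference measure under which the first codeword is independent of the rest. -/
def refFst (pq : Q → ℝ) (pS : A → B → W → ℝ) (k₁ : Q → A → X → ℝ)
    (k₂ : Q → B → Z → ℝ) (ch : X → Z → Y → ℝ) (v : A × B × W × Y × Q × X × Z) : ℝ :=
  (∑ a', ∑ x', jointTuple pq pS k₁ k₂ ch
    (a', v.2.1, v.2.2.1, v.2.2.2.1, v.2.2.2.2.1, x', v.2.2.2.2.2.2)) *
    k₁ v.2.2.2.2.1 v.1 v.2.2.2.2.2.1

/-- Reference measure under which the second codeword is independent of the rest. -/
def refSnd (pq : Q → ℝ) (pS : A → B → W → ℝ) (k₁ : Q → A → X → ℝ)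
    (k₂ : Q → B → Z → ℝ) (ch : X → Z → Y → ℝ) (v : A × B × W × Y × Q × X × Z) : ℝ :=
  (∑ b', ∑ z', jointTuple pq pS k₁ k₂ ch
    (v.1, b', v.2.2.1, v.2.2.2.1, v.2.2.2.2.1, v.2.2.2.2.2.1, z')) *
    k₂ v.2.2.2.2.1 v.2.1 v.2.2.2.2.2.2

/-- Reference measure under which both codewords are redrawn given the cloud centre. -/
def refBoth (u₁ : A → U) (pq : Q → ℝ) (pS : A → B → W → ℝ) (k₁ : Q → A → X → ℝ)
    (k₂ : Q → B → Z → ℝ) (ch : X → Z → Y → ℝ) (v : A × B × W × Y × Q × X × Z) : ℝ :=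
  (∑ a', ∑ b', ∑ x', ∑ z', if u₁ a' = u₁ v.1 then jointTuple pq pS k₁ k₂ ch
    (a', b', v.2.2.1, v.2.2.2.1, v.2.2.2.2.1, x', z') else 0) *
    (k₁ v.2.2.2.2.1 v.1 v.2.2.2.2.2.1 * k₂ v.2.2.2.2.1 v.2.1 v.2.2.2.2.2.2)

/-- Reference measure under which the cloud centre and both codewords are redrawn. -/
def refCommon (pq : Q → ℝ) (pS : A → B → W → ℝ) (k₁ : Q → A → X → ℝ)
    (k₂ : Q → B → Z → ℝ) (ch : X → Z → Y → ℝ) (v : A × B × W × Y × Q × X × Z) : ℝ :=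
  (∑ a', ∑ b', ∑ q', ∑ x', ∑ z', jointTuple pq pS k₁ k₂ ch
    (a', b', v.2.2.1, v.2.2.2.1, q', x', z')) *
    (pq v.2.2.2.2.1 * k₁ v.2.2.2.2.1 v.1 v.2.2.2.2.2.1 * k₂ v.2.2.2.2.1 v.2.1 v.2.2.2.2.2.2)

omit [Fintype A] [Fintype B] [Fintype W] [Fintype X] [Fintype Z] [Fintype Y] [Fintype Q]
  [Fintype U] in
theorem jointPmf_block (n : ℕ) (a : Fin n → A) (b : Fin n → B) (w : Fin n → W) (y : Fin n → Y)
    (q : Fin n → Q) (x : Fin n → X) (z : Fin n → Z) :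
    jointPmf (fun q : Fin n → Q => ∏ i, pq (q i)) (fun a b w => ∏ i, pS (a i) (b i) (w i))
      (fun q a x => ∏ i, k₁ (q i) (a i) (x i)) (fun q b z => ∏ i, k₂ (q i) (b i) (z i))
      (fun x z y => ∏ i, ch (x i) (z i) (y i)) a b w y q x z
      = ∏ i, jointTuple pq pS k₁ k₂ ch (a i, b i, w i, y i, q i, x i, z i) := by
  simp only [jointPmf, jointTuple, Finset.prod_mul_distrib]

theorem isPmf_block {α : Type} [Fintype α] {n : ℕ} {p : Fin n → α → ℝ} (hp : ∀ i, IsPmf (p i)) :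
    IsPmf (fun v : Fin n → α => ∏ i, p i (v i)) := by
  refine ⟨fun v => Finset.prod_nonneg fun i _ => (hp i).1 _, ?_⟩
  rw [sum_prod_codebook]
  simp [(hp _).2]

theorem exists_block_code
    (hS0 : ∀ a b w, 0 ≤ pS a b w) (hS : ∑ a, ∑ b, ∑ w, pS a b w = 1)
    (hq : IsPmf pq) (h₁ : ∀ q a, IsPmf (k₁ q a)) (h₂ : ∀ q b, IsPmf (k₂ q b))
    (hch : ∀ x z, IsPmf (ch x z)) (hu : ∀ a b w, pS a b w ≠ 0 → u₁ a = u₂ b) (δ : ℝ) (n : ℕ) :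
    ∃ (f : (Fin n → A) → Fin n → X) (g : (Fin n → B) → Fin n → Z)
      (d : (Fin n → Y) → (Fin n → W) → (Fin n → A) × (Fin n → B)),
      ∑ a : Fin n → A, ∑ b : Fin n → B, ∑ w : Fin n → W, ∑ y : Fin n → Y,
        (∏ i, pS (a i) (b i) (w i)) * (∏ i, ch (f a i) (g b i) (y i)) *
          (if d y w = (a, b) then 0 else 1) ≤
      (∑ v : Fin n → A × B × W × Y × Q × X × Z, (∏ i, jointTuple pq pS k₁ k₂ ch (v i)) *
        (if ∏ i, jointTuple pq pS k₁ k₂ ch (v i) ≤ Real.exp (n * δ) *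
          ∏ i, refFst pq pS k₁ k₂ ch (v i) then 1 else 0)) +
      (∑ v : Fin n → A × B × W × Y × Q × X × Z, (∏ i, jointTuple pq pS k₁ k₂ ch (v i)) *
        (if ∏ i, jointTuple pq pS k₁ k₂ ch (v i) ≤ Real.exp (n * δ) *
          ∏ i, refSnd pq pS k₁ k₂ ch (v i) then 1 else 0)) +
      (∑ v : Fin n → A × B × W × Y × Q × X × Z, (∏ i, jointTuple pq pS k₁ k₂ ch (v i)) *
        (if ∏ i, jointTuple pq pS k₁ k₂ ch (v i) ≤ Real.exp (n * δ) *
          ∏ i, refBoth u₁ pq pS k₁ k₂ ch (v i) then 1 else 0)) +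
      (∑ v : Fin n → A × B × W × Y × Q × X × Z, (∏ i, jointTuple pq pS k₁ k₂ ch (v i)) *
        (if ∏ i, jointTuple pq pS k₁ k₂ ch (v i) ≤ Real.exp (n * δ) *
          ∏ i, refCommon pq pS k₁ k₂ ch (v i) then 1 else 0)) +
      4 / Real.exp (n * δ) := by
  set J := jointTuple pq pS k₁ k₂ ch with hJ
  have hJ0 : ∀ v, 0 ≤ J v := fun v => jointPmf_nonneg hS0 hq h₁ h₂ hch _ _ _ _ _ _ _
  have hk₁ := fun q a => (h₁ q a).1
  have hk₂ := fun q a => (h₂ q a).1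
  have r10 : ∀ v, 0 ≤ refFst pq pS k₁ k₂ ch v := fun v => mul_nonneg
    (Finset.sum_nonneg fun _ _ => Finset.sum_nonneg fun _ _ => hJ0 _) (hk₁ _ _ _)
  have r20 : ∀ v, 0 ≤ refSnd pq pS k₁ k₂ ch v := fun v => mul_nonneg
    (Finset.sum_nonneg fun _ _ => Finset.sum_nonneg fun _ _ => hJ0 _) (hk₂ _ _ _)
  have r30 : ∀ v, 0 ≤ refBoth u₁ pq pS k₁ k₂ ch v := fun v => mul_nonneg
    (Finset.sum_nonneg fun _ _ => Finset.sum_nonneg fun _ _ => Finset.sum_nonneg fun _ _ =>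
      Finset.sum_nonneg fun _ _ => by split_ifs; exacts [hJ0 _, le_rfl])
    (mul_nonneg (hk₁ _ _ _) (hk₂ _ _ _))
  have r40 : ∀ v, 0 ≤ refCommon pq pS k₁ k₂ ch v := fun v => mul_nonneg
    (Finset.sum_nonneg fun _ _ => Finset.sum_nonneg fun _ _ => Finset.sum_nonneg fun _ _ =>
      Finset.sum_nonneg fun _ _ => Finset.sum_nonneg fun _ _ => hJ0 _)
    (mul_nonneg (mul_nonneg (hq.1 _) (hk₁ _ _ _)) (hk₂ _ _ _))
  set G := Real.exp (n * δ) with hGdef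
  have hG : 0 < G := Real.exp_pos _
  let passes : (Fin n → A × B × W × Y × Q × X × Z) → Prop := fun v =>
    G * ∏ i, refFst pq pS k₁ k₂ ch (v i) < ∏ i, J (v i) ∧
    G * ∏ i, refSnd pq pS k₁ k₂ ch (v i) < ∏ i, J (v i) ∧
    G * ∏ i, refBoth u₁ pq pS k₁ k₂ ch (v i) < ∏ i, J (v i) ∧
    G * ∏ i, refCommon pq pS k₁ k₂ ch (v i) < ∏ i, J (v i)
  let τ : (Fin n → A × B × W × Y × Q × X × Z) → ℝ := fun v => if passes v then 1 else 0
  let zip : (Fin n → A) → (Fin n → B) → (Fin n → W) → (Fin n → Y) → (Fin n → Q) → (Fin n → X) →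
    (Fin n → Z) → Fin n → A × B × W × Y × Q × X × Z :=
    fun a b w y q x z i => (a i, b i, w i, y i, q i, x i, z i)
  have hτ : ∀ (v : Fin n → A × B × W × Y × Q × X × Z) (r : ℝ),
      (passes v → r ≤ ∏ i, J (v i)) → r * τ v ≤ ∏ i, J (v i) := by
    intro v r h
    by_cases hp : passes v
    · simpa [τ, hp] using h hp
    · simpa [τ, hp] using Finset.prod_nonneg fun i _ => hJ0 (v i)
  have hSn : ∑ a : Fin n → A, ∑ b : Fin n → B, ∑ w : Fin n → W, ∏ i, pS (a i) (b i) (w i)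
      = 1 := by
    have h1 : ∏ _i : Fin n, ∑ a, ∑ b, ∑ w, pS a b w = 1 := by simp [hS]
    rw [← h1]
    simp only [← sum_prod_codebook]
  obtain ⟨f, g, d, hfgd⟩ := exists_code
    (pq := fun q : Fin n → Q => ∏ i, pq (q i))
    (pS := fun (a : Fin n → A) (b : Fin n → B) (w : Fin n → W) => ∏ i, pS (a i) (b i) (w i))
    (k₁ := fun (q : Fin n → Q) (a : Fin n → A) (x : Fin n → X) => ∏ i, k₁ (q i) (a i) (x i))
    (k₂ := fun (q : Fin n → Q) (b : Fin n → B) (z : Fin n → Z) => ∏ i, k₂ (q i) (b i) (z i))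
    (ch := fun (x : Fin n → X) (z : Fin n → Z) (y : Fin n → Y) => ∏ i, ch (x i) (z i) (y i))
    (u₁ := fun a i => u₁ (a i)) (u₂ := fun b i => u₂ (b i)) (G := G)
    (fun a b w y q x z => τ (zip a b w y q x z))
    (fun a b w => Finset.prod_nonneg fun i _ => hS0 _ _ _)
    hSn
    (isPmf_block fun _ => hq) (fun q a => isPmf_block fun i => h₁ _ _)
    (fun q b => isPmf_block fun i => h₂ _ _) (fun x z => isPmf_block fun i => hch _ _) hG
    (fun a b w h => funext fun i => hu _ _ _ (Finset.prod_ne_zero_iff.mp h i (Finset.mem_univ i)))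
    (fun a b w y q x z => by by_cases h : passes (zip a b w y q x z) <;> simp [τ, h])
    (fun a b w y q x z h => by
      have hp : passes (zip a b w y q x z) := by
        by_contra hc
        exact h (if_neg hc)
      have hpos : (∏ i, J (zip a b w y q x z i)) ≠ 0 := (lt_of_le_of_lt
        (mul_nonneg hG.le (Finset.prod_nonneg fun i _ => r10 _)) hp.1).ne'
      refine funext fun i => hu (a i) (b i) (w i) fun h0 => ?_
      refine Finset.prod_ne_zero_iff.mp hpos i (Finset.mem_univ i) ?_
      simp [hJ, jointTuple, jointPmf, zip, h0])
    (fun a b w y q x z => by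
      simp only [jointPmf_block]
      refine hτ (zip a b w y q x z) _ fun hp => (le_of_eq ?_).trans hp.1.le
      simp only [refFst, zip, Finset.prod_mul_distrib, ← sum_prod_codebook])
    (fun a b w y q x z => by
      simp only [jointPmf_block]
      refine hτ (zip a b w y q x z) _ fun hp => (le_of_eq ?_).trans hp.2.1.le
      simp only [refSnd, zip, Finset.prod_mul_distrib, ← sum_prod_codebook])
    (fun a b w y q x z => by
      simp only [jointPmf_block]
      refine hτ (zip a b w y q x z) _ fun hp => (le_of_eq ?_).trans hp.2.2.1.le
      simp only [refBoth, zip, Finset.prod_mul_distrib, ← sum_prod_codebook, funext_iff,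
        Finset.prod_ite_zero, Finset.mem_univ, true_implies])
    (fun a b w y q x z => by
      simp only [jointPmf_block]
      refine hτ (zip a b w y q x z) _ fun hp => (le_of_eq ?_).trans hp.2.2.2.le
      simp only [refCommon, zip, Finset.prod_mul_distrib, ← sum_prod_codebook])
  refine ⟨f, g, d, le_trans (le_of_eq ?_) (hfgd.trans (add_le_add_left ?_ _))⟩
  · refine Finset.sum_congr rfl fun a _ => Finset.sum_congr rfl fun b _ =>
      Finset.sum_congr rfl fun w _ => Finset.sum_congr rfl fun y _ => ?_
    by_cases h : d y w = (a, b)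
    · rw [if_pos h, if_pos h]
    · rw [if_neg h, if_neg h]
  have hre : ∑ a : Fin n → A, ∑ b : Fin n → B, ∑ w : Fin n → W, ∑ y : Fin n → Y,
      ∑ q : Fin n → Q, ∑ x : Fin n → X, ∑ z : Fin n → Z,
      (∏ i, J (zip a b w y q x z i)) * (1 - τ (zip a b w y q x z))
      = ∑ v : Fin n → A × B × W × Y × Q × X × Z, (∏ i, J (v i)) * (1 - τ v) := by
    rw [← Fintype.sum_equiv (⟨fun v => zip v.1 v.2.1 v.2.2.1 v.2.2.2.1 v.2.2.2.2.1 v.2.2.2.2.2.1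
        v.2.2.2.2.2.2, fun v => (fun i => (v i).1, fun i => (v i).2.1, fun i => (v i).2.2.1,
          fun i => (v i).2.2.2.1, fun i => (v i).2.2.2.2.1, fun i => (v i).2.2.2.2.2.1,
          fun i => (v i).2.2.2.2.2.2), fun _ => rfl, fun _ => rfl⟩ :
        (Fin n → A) × (Fin n → B) × (Fin n → W) × (Fin n → Y) × (Fin n → Q) × (Fin n → X) ×
          (Fin n → Z) ≃ (Fin n → A × B × W × Y × Q × X × Z)) _ _ (fun _ => rfl)]
    simp only [Fintype.sum_prod_type, Equiv.coe_fn_mk]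
  simp only [jointPmf_block]
  refine (le_of_eq hre).trans ?_
  simp only [← Finset.sum_add_distrib, ← mul_add]
  refine Finset.sum_le_sum fun v _ =>
    mul_le_mul_of_nonneg_left ?_ (Finset.prod_nonneg fun i _ => hJ0 _)
  have ind : ∀ P : Prop, (0 : ℝ) ≤ if P then 1 else 0 := fun P => by split_ifs <;> norm_num
  by_cases hp : passes v
  · simp only [τ, if_pos hp, sub_self]
    exact add_nonneg (add_nonneg (add_nonneg (ind _) (ind _)) (ind _)) (ind _)
  · simp only [τ, if_neg hp, sub_zero]
    have i1 := ind (∏ i, J (v i) ≤ G * ∏ i, refFst pq pS k₁ k₂ ch (v i))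
    have i2 := ind (∏ i, J (v i) ≤ G * ∏ i, refSnd pq pS k₁ k₂ ch (v i))
    have i3 := ind (∏ i, J (v i) ≤ G * ∏ i, refBoth u₁ pq pS k₁ k₂ ch (v i))
    have i4 := ind (∏ i, J (v i) ≤ G * ∏ i, refCommon pq pS k₁ k₂ ch (v i))
    by_contra! hc
    refine hp ⟨?_, ?_, ?_, ?_⟩ <;> by_contra! hle <;> rw [if_pos hle] at hc <;> linarith

end Block

section Asymptotics

variable {A B W X Z Y Q U : Type} [Fintype A] [Fintype B] [Fintype W] [Fintype X] [Fintype Z]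
  [Fintype Y] [Fintype Q] [Fintype U] {pq : Q → ℝ} {pS : A → B → W → ℝ} {k₁ : Q → A → X → ℝ}
  {k₂ : Q → B → Z → ℝ} {ch : X → Z → Y → ℝ} {u₁ : A → U} {u₂ : B → U}

omit [Fintype U] in
theorem isPmf_jointTuple (hS0 : ∀ a b w, 0 ≤ pS a b w) (hS : ∑ a, ∑ b, ∑ w, pS a b w = 1)
    (hq : IsPmf pq) (h₁ : ∀ q a, IsPmf (k₁ q a)) (h₂ : ∀ q b, IsPmf (k₂ q b))
    (hch : ∀ x z, IsPmf (ch x z)) : IsPmf (jointTuple pq pS k₁ k₂ ch) := by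
  refine ⟨fun v => jointPmf_nonneg hS0 hq h₁ h₂ hch _ _ _ _ _ _ _, ?_⟩
  rw [← sum_jointPmf hS hq h₁ h₂ hch]
  exact Fintype.sum_equiv ⟨fun v => (v.1, v.2.1, v.2.2.1, v.2.2.2.2.1, v.2.2.2.2.2.1,
    v.2.2.2.2.2.2, v.2.2.2.1), fun v => (v.1, v.2.1, v.2.2.1, v.2.2.2.2.2.2, v.2.2.2.1,
    v.2.2.2.2.1, v.2.2.2.2.2.1), fun _ => rfl, fun _ => rfl⟩ _ _ fun _ => rfl

omit [Fintype A] [Fintype B] [Fintype W] [Fintype X] [Fintype Z] [Fintype Y] [Fintype Q]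
  [Fintype U] in
theorem factors_ne_zero {v : A × B × W × Y × Q × X × Z}
    (hv : jointTuple pq pS k₁ k₂ ch v ≠ 0) :
    pq v.2.2.2.2.1 ≠ 0 ∧ pS v.1 v.2.1 v.2.2.1 ≠ 0 ∧ k₁ v.2.2.2.2.1 v.1 v.2.2.2.2.2.1 ≠ 0 ∧
      k₂ v.2.2.2.2.1 v.2.1 v.2.2.2.2.2.2 ≠ 0 ∧
      ch v.2.2.2.2.2.1 v.2.2.2.2.2.2 v.2.2.2.1 ≠ 0 := by
  simpa [jointTuple, jointPmf, and_assoc] using hv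

theorem sum_pos_of_term_pos {α : Type} [Fintype α] {F : α → ℝ} (hF : ∀ a, 0 ≤ F a) (a : α)
    (ha : 0 < F a) : 0 < ∑ a, F a :=
  Finset.sum_pos' (fun a _ => hF a) ⟨a, Finset.mem_univ a, ha⟩

omit [Fintype W] [Fintype U] in
theorem marginals_pos
    (hS0 : ∀ a b w, 0 ≤ pS a b w)
    (hq : IsPmf pq) (h₁ : ∀ q a, IsPmf (k₁ q a)) (h₂ : ∀ q b, IsPmf (k₂ q b))
    (hch : ∀ x z, IsPmf (ch x z)) {v : A × B × W × Y × Q × X × Z}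
    (hv : 0 < jointTuple pq pS k₁ k₂ ch v) :
    (0 < ∑ a', ∑ x', jointTuple pq pS k₁ k₂ ch
      (a', v.2.1, v.2.2.1, v.2.2.2.1, v.2.2.2.2.1, x', v.2.2.2.2.2.2)) ∧
    (0 < ∑ b', ∑ z', jointTuple pq pS k₁ k₂ ch
      (v.1, b', v.2.2.1, v.2.2.2.1, v.2.2.2.2.1, v.2.2.2.2.2.1, z')) ∧
    (0 < ∑ a', ∑ b', ∑ x', ∑ z', if u₁ a' = u₁ v.1 then jointTuple pq pS k₁ k₂ ch
      (a', b', v.2.2.1, v.2.2.2.1, v.2.2.2.2.1, x', z') else 0) ∧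
    (0 < ∑ a', ∑ b', ∑ q', ∑ x', ∑ z', jointTuple pq pS k₁ k₂ ch
      (a', b', v.2.2.1, v.2.2.2.1, q', x', z')) := by
  have hJ0 : ∀ v, 0 ≤ jointTuple pq pS k₁ k₂ ch v := fun v =>
    jointPmf_nonneg hS0 hq h₁ h₂ hch _ _ _ _ _ _ _
  obtain ⟨a, b, w, y, q, x, z⟩ := v
  have hI : ∀ a' b' x' z', 0 ≤ if u₁ a' = u₁ a then jointTuple pq pS k₁ k₂ ch
      (a', b', w, y, q, x', z') else 0 := fun a' b' x' z' => by
    split_ifs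
    exacts [hJ0 _, le_rfl]
  refine ⟨?_, ?_, ?_, ?_⟩
  · exact sum_pos_of_term_pos (fun _ => Finset.sum_nonneg fun _ _ => hJ0 _) a <|
      sum_pos_of_term_pos (fun _ => hJ0 _) x hv
  · exact sum_pos_of_term_pos (fun _ => Finset.sum_nonneg fun _ _ => hJ0 _) b <|
      sum_pos_of_term_pos (fun _ => hJ0 _) z hv
  · refine sum_pos_of_term_pos (fun _ => Finset.sum_nonneg fun _ _ => Finset.sum_nonneg fun _ _ =>
      Finset.sum_nonneg fun _ _ => hI _ _ _ _) a <|
      sum_pos_of_term_pos (fun _ => Finset.sum_nonneg fun _ _ =>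
      Finset.sum_nonneg fun _ _ => hI _ _ _ _) b <|
      sum_pos_of_term_pos (fun _ => Finset.sum_nonneg fun _ _ => hI _ _ _ _) x <|
      sum_pos_of_term_pos (fun _ => hI _ _ _ _) z ?_
    rwa [if_pos rfl]
  · exact sum_pos_of_term_pos (fun _ => Finset.sum_nonneg fun _ _ => Finset.sum_nonneg fun _ _ =>
      Finset.sum_nonneg fun _ _ => Finset.sum_nonneg fun _ _ => hJ0 _) a <|
      sum_pos_of_term_pos (fun _ => Finset.sum_nonneg fun _ _ => Finset.sum_nonneg fun _ _ =>
      Finset.sum_nonneg fun _ _ => hJ0 _) b <|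
      sum_pos_of_term_pos (fun _ => Finset.sum_nonneg fun _ _ =>
      Finset.sum_nonneg fun _ _ => hJ0 _) q <|
      sum_pos_of_term_pos (fun _ => Finset.sum_nonneg fun _ _ => hJ0 _) x <|
      sum_pos_of_term_pos (fun _ => hJ0 _) z hv

theorem exists_block_code_lt
    (hS0 : ∀ a b w, 0 ≤ pS a b w) (hS : ∑ a, ∑ b, ∑ w, pS a b w = 1)
    (hq : IsPmf pq) (h₁ : ∀ q a, IsPmf (k₁ q a)) (h₂ : ∀ q b, IsPmf (k₂ q b))
    (hch : ∀ x z, IsPmf (ch x z)) (hu : ∀ a b w, pS a b w ≠ 0 → u₁ a = u₂ b)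
    (d1 : 0 < ∑ v, jointTuple pq pS k₁ k₂ ch v * (Real.log (jointTuple pq pS k₁ k₂ ch v)
      - Real.log (refFst pq pS k₁ k₂ ch v)))
    (d2 : 0 < ∑ v, jointTuple pq pS k₁ k₂ ch v * (Real.log (jointTuple pq pS k₁ k₂ ch v)
      - Real.log (refSnd pq pS k₁ k₂ ch v)))
    (d3 : 0 < ∑ v, jointTuple pq pS k₁ k₂ ch v * (Real.log (jointTuple pq pS k₁ k₂ ch v)
      - Real.log (refBoth u₁ pq pS k₁ k₂ ch v)))
    (d4 : 0 < ∑ v, jointTuple pq pS k₁ k₂ ch v * (Real.log (jointTuple pq pS k₁ k₂ ch v)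
      - Real.log (refCommon pq pS k₁ k₂ ch v))) {ε : ℝ} (hε : 0 < ε) :
    ∃ n : ℕ, 0 < n ∧ ∃ (f : (Fin n → A) → Fin n → X) (g : (Fin n → B) → Fin n → Z)
      (d : (Fin n → Y) → (Fin n → W) → (Fin n → A) × (Fin n → B)),
      ∑ a : Fin n → A, ∑ b : Fin n → B, ∑ w : Fin n → W, ∑ y : Fin n → Y,
        (∏ i, pS (a i) (b i) (w i)) * (∏ i, ch (f a i) (g b i) (y i)) *
          (if d y w = (a, b) then 0 else 1) < ε := by
  obtain ⟨δ, hδ0, hδ⟩ := exists_between (lt_min (lt_min d1 d2) (lt_min d3 d4))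
  rw [lt_min_iff, lt_min_iff, lt_min_iff] at hδ
  have hJ := isPmf_jointTuple hS0 hS hq h₁ h₂ hch
  have hk₁ : ∀ {q a x}, k₁ q a x ≠ 0 → 0 < k₁ q a x := fun {q a x} h =>
    lt_of_le_of_ne ((h₁ q a).1 x) (Ne.symm h)
  have hk₂ : ∀ {q a x}, k₂ q a x ≠ 0 → 0 < k₂ q a x := fun {q a x} h =>
    lt_of_le_of_ne ((h₂ q a).1 x) (Ne.symm h)
  have hpq : ∀ {q}, pq q ≠ 0 → 0 < pq q := fun {q} h => lt_of_le_of_ne (hq.1 q) (Ne.symm h)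
  have hm := fun v (hv : 0 < jointTuple pq pS k₁ k₂ ch v) =>
    marginals_pos (u₁ := u₁) hS0 hq h₁ h₂ hch hv
  have hf := fun v (hv : 0 < jointTuple pq pS k₁ k₂ ch v) => factors_ne_zero hv.ne'
  obtain ⟨c1, h10, h11, hc1⟩ := exists_chernoff_bound (jointTuple pq pS k₁ k₂ ch)
    (refFst pq pS k₁ k₂ ch) hJ
    (fun v hv => mul_pos (hm v hv).1 (hk₁ (hf v hv).2.2.1)) δ hδ.1.1
  obtain ⟨c2, h20, h21, hc2⟩ := exists_chernoff_bound (jointTuple pq pS k₁ k₂ ch)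
    (refSnd pq pS k₁ k₂ ch) hJ
    (fun v hv => mul_pos (hm v hv).2.1 (hk₂ (hf v hv).2.2.2.1)) δ hδ.1.2
  obtain ⟨c3, h30, h31, hc3⟩ := exists_chernoff_bound (jointTuple pq pS k₁ k₂ ch)
    (refBoth u₁ pq pS k₁ k₂ ch) hJ
    (fun v hv => mul_pos (hm v hv).2.2.1
      (mul_pos (hk₁ (hf v hv).2.2.1) (hk₂ (hf v hv).2.2.2.1))) δ hδ.2.1
  obtain ⟨c4, h40, h41, hc4⟩ := exists_chernoff_bound (jointTuple pq pS k₁ k₂ ch)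
    (refCommon pq pS k₁ k₂ ch) hJ
    (fun v hv => mul_pos (hm v hv).2.2.2
      (mul_pos (mul_pos (hpq (hf v hv).1) (hk₁ (hf v hv).2.2.1)) (hk₂ (hf v hv).2.2.2.1)))
    δ hδ.2.2
  have hlim : Filter.Tendsto (fun n : ℕ => c1 ^ n + c2 ^ n + c3 ^ n + c4 ^ n
      + 4 * (Real.exp (-δ)) ^ n) Filter.atTop (nhds 0) := by
    have he : Real.exp (-δ) < 1 := by simpa using hδ0
    simpa using ((((tendsto_pow_atTop_nhds_zero_of_lt_one h10 h11).add
      (tendsto_pow_atTop_nhds_zero_of_lt_one h20 h21)).add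
      (tendsto_pow_atTop_nhds_zero_of_lt_one h30 h31)).add
      (tendsto_pow_atTop_nhds_zero_of_lt_one h40 h41)).add
      ((tendsto_pow_atTop_nhds_zero_of_lt_one (Real.exp_pos _).le he).const_mul 4)
  obtain ⟨n, hn, hn0⟩ := ((hlim.eventually (gt_mem_nhds hε)).and
    (Filter.eventually_gt_atTop 0)).exists
  obtain ⟨f, g, d, hfgd⟩ := exists_block_code hS0 hS hq h₁ h₂ hch hu δ n
  refine ⟨n, hn0, f, g, d, ?_⟩
  have hexp : 4 / Real.exp (n * δ) = 4 * (Real.exp (-δ)) ^ n := by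
    rw [← Real.exp_nat_mul, div_eq_mul_inv, ← Real.exp_neg]
    ring_nf
  rw [hexp] at hfgd
  linarith [hc1 n, hc2 n, hc3 n, hc4 n]

end Asymptotics

section Entropy

variable {Ω α β γ ζ : Type} [Fintype Ω] [Fintype α] [Fintype β] [Fintype γ] [Fintype ζ]
  {μ : Ω → ℝ}

theorem ent_eq_neg_sum_mul_log (μ : Ω → ℝ) (X : Ω → α) :
    ent μ X = -∑ ω, μ ω * Real.log (prD μ X (X ω)) := by
  rw [ent, neg_inj]
  have h : ∀ a, prD μ X a * Real.log (prD μ X a) =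
      ∑ ω, if X ω = a then μ ω * Real.log (prD μ X (X ω)) else 0 := by
    intro a
    conv_lhs => rw [prD, Finset.sum_mul]
    refine Finset.sum_congr rfl fun ω _ => ?_
    split_ifs with h
    · rw [h]
      rfl
    · simp
  rw [Finset.sum_congr rfl fun a _ => h a, Finset.sum_comm]
  simp

omit [Fintype α] [Fintype β] in
theorem prD_congr {X : Ω → α} {X' : Ω → β} {a : α} {b : β} (h : ∀ ω, X ω = a ↔ X' ω = b) :
    prD μ X a = prD μ X' b := by
  simp only [prD, h]

theorem ent_congr {X : Ω → α} {X' : Ω → β} (h : ∀ ω ω', X ω = X ω' ↔ X' ω = X' ω') :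
    ent μ X = ent μ X' := by
  rw [ent_eq_neg_sum_mul_log, ent_eq_neg_sum_mul_log]
  exact congrArg _ <| Finset.sum_congr rfl fun ω _ => by rw [prD_congr fun ω' => h ω' ω]

omit [Fintype α] in
theorem prD_comp (μ : Ω → ℝ) (B : Ω → β) (f : β → α) (a : α) :
    prD μ (fun ω => f (B ω)) a = ∑ b, if f b = a then prD μ B b else 0 := by
  have h : ∀ b, (if f b = a then prD μ B b else 0) =
      ∑ ω, if B ω = b then (if f (B ω) = a then μ ω else 0) else 0 := by
    intro b
    by_cases hb : f b = a
    · rw [if_pos hb, prD]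
      refine Finset.sum_congr rfl fun ω _ => ?_
      by_cases hω : B ω = b
      · simp [hω, hb]
      · simp [hω]
    · rw [if_neg hb]
      refine (Finset.sum_eq_zero fun ω _ => ?_).symm
      by_cases hω : B ω = b
      · simp [hω, hb]
      · simp [hω]
  rw [Finset.sum_congr rfl fun b _ => h b, Finset.sum_comm, prD]
  simp

theorem ent_comp {p : β → ℝ} {B : Ω → β} (hB : ∀ b, prD μ B b = p b) (f : β → α) :
    ent p f = ent μ (fun ω => f (B ω)) := by
  have h : ∀ a, prD μ (fun ω => f (B ω)) a = prD p f a := fun a => by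
    rw [prD_comp, prD]
    simp only [hB]
  simp only [ent, h]

omit [Fintype α] in
theorem prD_apply_pos (hμ : ∀ ω, 0 ≤ μ ω) (X : Ω → α) {ω : Ω} (hω : μ ω ≠ 0) :
    0 < prD μ X (X ω) := by
  refine Finset.sum_pos' (fun ω' _ => ?_) ⟨ω, Finset.mem_univ ω, ?_⟩
  · split_ifs
    exacts [hμ _, le_rfl]
  · rw [if_pos rfl]
    exact lt_of_le_of_ne (hμ ω) hω.symm

theorem ent_pair_of_disintegration (hμ : ∀ ω, 0 ≤ μ ω) {B : Ω → β} {Z : Ω → ζ}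
    (f : β → γ) (κ : γ → ζ → ℝ)
    (hB : ∀ b z, prD μ (fun ω => (B ω, Z ω)) (b, z) = prD μ B b * κ (f b) z) :
    ent μ (fun ω => (f (B ω), Z ω)) =
      ent μ (fun ω => f (B ω)) - ∑ ω, μ ω * Real.log (κ (f (B ω)) (Z ω)) := by
  have h : ∀ c z, prD μ (fun ω => (f (B ω), Z ω)) (c, z) =
      prD μ (fun ω => f (B ω)) c * κ c z := by
    intro c z
    rw [prD_comp μ B f, Finset.sum_mul,
      prD_comp μ (fun ω => (B ω, Z ω)) (fun v : β × ζ => (f v.1, v.2)), Fintype.sum_prod_type]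
    refine Finset.sum_congr rfl fun b _ => ?_
    by_cases hb : f b = c
    · simp [hb, hB]
    · simp [hb]
  rw [ent_eq_neg_sum_mul_log, ent_eq_neg_sum_mul_log, ← neg_add', neg_inj,
    ← Finset.sum_add_distrib]
  refine Finset.sum_congr rfl fun ω _ => ?_
  rcases eq_or_ne (μ ω) 0 with h0 | h0
  · simp [h0]
  · have hp := prD_apply_pos hμ (fun ω => (f (B ω), Z ω)) h0
    rw [h] at hp ⊢
    rw [Real.log_mul (left_ne_zero_of_mul hp.ne') (right_ne_zero_of_mul hp.ne'), mul_add]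

end Entropy

section MacEntropy

variable {S1 S2 W1 X1 X2 Y1 : Type} [Fintype S1] [Fintype S2] [Fintype W1] [Fintype X1]
  [Fintype X2] [Fintype Y1] {nq nu : ℕ} {pq : Fin nq → ℝ} {pS : S1 × S2 × W1 → ℝ}
  {px1 : Fin nq → S1 → X1 → ℝ} {px2 : Fin nq → S2 → X2 → ℝ} {chan : X1 → X2 → Y1 → ℝ}

theorem prD_macJointMeasure_inputs (hchan : ∀ x1 x2, IsPmf (chan x1 x2))
    (q : Fin nq) (s : S1 × S2 × W1) (x1 : X1) (x2 : X2) :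
    prD (macJointMeasure nq pq pS px1 px2 chan) (fun z => (z.1, z.2.1, z.2.2.1, z.2.2.2.1))
      (q, s, x1, x2) = pq q * pS s * px1 q s.1 x1 * px2 q s.2.1 x2 := by
  rw [prD, Fintype.sum_prod_type, Finset.sum_eq_single q, Fintype.sum_prod_type,
    Finset.sum_eq_single s, Fintype.sum_prod_type, Finset.sum_eq_single x1,
    Fintype.sum_prod_type, Finset.sum_eq_single x2]
  · simp [macJointMeasure, ← Finset.mul_sum, (hchan _ _).2]
  all_goals simp +contextual

theorem prD_macJointMeasure_full (q : Fin nq) (s : S1 × S2 × W1) (x1 : X1) (x2 : X2) (y : Y1) :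
    prD (macJointMeasure nq pq pS px1 px2 chan)
      (fun z => ((z.1, z.2.1, z.2.2.1, z.2.2.2.1), z.2.2.2.2)) ((q, s, x1, x2), y)
      = pq q * pS s * px1 q s.1 x1 * px2 q s.2.1 x2 * chan x1 x2 y := by
  rw [prD, Finset.sum_eq_single (q, s, x1, x2, y)]
  · simp [macJointMeasure]
  · rintro ⟨q', s', x1', x2', y'⟩ - h
    refine if_neg fun h' => h ?_
    simpa [and_assoc] using h'
  · simp

theorem prD_macJointMeasure_snd (hchan : ∀ x1 x2, IsPmf (chan x1 x2))
    (h₁ : ∀ q s1, IsPmf (px1 q s1)) (q : Fin nq) (s : S1 × S2 × W1) (x2 : X2) :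
    prD (macJointMeasure nq pq pS px1 px2 chan) (fun z => ((z.1, z.2.1), z.2.2.2.1))
      ((q, s), x2) = pq q * pS s * px2 q s.2.1 x2 := by
  refine (prD_comp (macJointMeasure nq pq pS px1 px2 chan)
    (fun z => (z.1, z.2.1, z.2.2.1, z.2.2.2.1))
    (fun v : Fin nq × (S1 × S2 × W1) × X1 × X2 => ((v.1, v.2.1), v.2.2.2)) ((q, s), x2)).trans ?_
  rw [Fintype.sum_prod_type, Finset.sum_eq_single q, Fintype.sum_prod_type,
    Finset.sum_eq_single s, Fintype.sum_prod_type]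
  · simp [prD_macJointMeasure_inputs hchan, ← Finset.mul_sum, ← Finset.sum_mul, (h₁ _ _).2]
  all_goals simp +contextual

theorem prD_macJointMeasure_fst (hchan : ∀ x1 x2, IsPmf (chan x1 x2))
    (h₂ : ∀ q s2, IsPmf (px2 q s2)) (q : Fin nq) (s : S1 × S2 × W1) (x1 : X1) :
    prD (macJointMeasure nq pq pS px1 px2 chan) (fun z => ((z.1, z.2.1), z.2.2.1))
      ((q, s), x1) = pq q * pS s * px1 q s.1 x1 := by
  refine (prD_comp (macJointMeasure nq pq pS px1 px2 chan)
    (fun z => (z.1, z.2.1, z.2.2.1, z.2.2.2.1))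
    (fun v : Fin nq × (S1 × S2 × W1) × X1 × X2 => ((v.1, v.2.1), v.2.2.1)) ((q, s), x1)).trans ?_
  rw [Fintype.sum_prod_type, Finset.sum_eq_single q, Fintype.sum_prod_type,
    Finset.sum_eq_single s, Fintype.sum_prod_type]
  · simp [prD_macJointMeasure_inputs hchan, ← Finset.mul_sum, (h₂ _ _).2]
  all_goals simp +contextual

theorem prD_macJointMeasure_time_source (hchan : ∀ x1 x2, IsPmf (chan x1 x2))
    (h₁ : ∀ q s1, IsPmf (px1 q s1)) (h₂ : ∀ q s2, IsPmf (px2 q s2))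
    (q : Fin nq) (s : S1 × S2 × W1) :
    prD (macJointMeasure nq pq pS px1 px2 chan) (fun z => (z.1, z.2.1)) (q, s) =
      pq q * pS s := by
  refine (prD_comp (macJointMeasure nq pq pS px1 px2 chan)
    (fun z => ((z.1, z.2.1), z.2.2.1))
    (fun v : (Fin nq × (S1 × S2 × W1)) × X1 => v.1) (q, s)).trans ?_
  rw [Fintype.sum_prod_type,
    Finset.sum_eq_single (q, s)]
  · simp [prD_macJointMeasure_fst hchan h₂, ← Finset.mul_sum, (h₁ _ _).2]
  all_goals simp +contextual

theorem prD_macJointMeasure_source (hq : IsPmf pq) (hchan : ∀ x1 x2, IsPmf (chan x1 x2))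
    (h₁ : ∀ q s1, IsPmf (px1 q s1)) (h₂ : ∀ q s2, IsPmf (px2 q s2)) (s : S1 × S2 × W1) :
    prD (macJointMeasure nq pq pS px1 px2 chan) (fun z => z.2.1) s = pS s := by
  refine (prD_comp (macJointMeasure nq pq pS px1 px2 chan)
    (fun z => (z.1, z.2.1)) (fun v : Fin nq × (S1 × S2 × W1) => v.2) s).trans ?_
  rw [Fintype.sum_prod_type]
  simp [prD_macJointMeasure_time_source hchan h₁ h₂, ← Finset.sum_mul, hq.2]

end MacEntropy

section MacInformation

variable {S1 S2 W1 X1 X2 Y1 : Type} [Fintype S1] [Fintype S2] [Fintype W1] [Fintype X1]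
  [Fintype X2] [Fintype Y1] {nq nu : ℕ} {pq : Fin nq → ℝ} {pS : S1 × S2 × W1 → ℝ}
  {px1 : Fin nq → S1 → X1 → ℝ} {px2 : Fin nq → S2 → X2 → ℝ} {chan : X1 → X2 → Y1 → ℝ}

theorem macJointMeasure_nonneg (hpS : IsPmf pS) (hq : IsPmf pq)
    (h₁ : ∀ q s1, IsPmf (px1 q s1)) (h₂ : ∀ q s2, IsPmf (px2 q s2))
    (hchan : ∀ x1 x2, IsPmf (chan x1 x2)) (z : Fin nq × (S1 × S2 × W1) × X1 × X2 × Y1) :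
    0 ≤ macJointMeasure nq pq pS px1 px2 chan z :=
  mul_nonneg (mul_nonneg (mul_nonneg (mul_nonneg (hq.1 _) (hpS.1 _)) ((h₁ _ _).1 _))
    ((h₂ _ _).1 _)) ((hchan _ _).1 _)

/-- Conditioning inputs and a variable `Z` of the base: the conditional mutual information with
the channel output only involves the channel law and the entropies of `Z` and `(Y, Z)`. -/
theorem condMutInf_output {α γ : Type} [Fintype α] [Fintype γ] (hpS : IsPmf pS) (hq : IsPmf pq)
    (h₁ : ∀ q s1, IsPmf (px1 q s1)) (h₂ : ∀ q s2, IsPmf (px2 q s2))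
    (hchan : ∀ x1 x2, IsPmf (chan x1 x2))
    (X : Fin nq × (S1 × S2 × W1) × X1 × X2 → α) (Z : Fin nq × (S1 × S2 × W1) × X1 × X2 → γ)
    (e : α × γ → X1 × X2) (he : ∀ b, e (X b, Z b) = b.2.2) :
    condMutInf (macJointMeasure nq pq pS px1 px2 chan)
      (fun z => X (z.1, z.2.1, z.2.2.1, z.2.2.2.1)) (fun z => z.2.2.2.2)
      (fun z => Z (z.1, z.2.1, z.2.2.1, z.2.2.2.1)) =
    ent (macJointMeasure nq pq pS px1 px2 chan)
      (fun z => (z.2.2.2.2, Z (z.1, z.2.1, z.2.2.1, z.2.2.2.1))) -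
    ent (macJointMeasure nq pq pS px1 px2 chan)
      (fun z => Z (z.1, z.2.1, z.2.2.1, z.2.2.2.1)) +
    ∑ z, macJointMeasure nq pq pS px1 px2 chan z *
      Real.log (chan z.2.2.1 z.2.2.2.1 z.2.2.2.2) := by
  have h := ent_pair_of_disintegration (macJointMeasure_nonneg hpS hq h₁ h₂ hchan)
    (B := fun z => (z.1, z.2.1, z.2.2.1, z.2.2.2.1)) (Z := fun z => z.2.2.2.2)
    (fun b => (X b, Z b)) (fun c y => chan (e c).1 (e c).2 y) (by
      rintro ⟨q, s, x1, x2⟩ y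
      rw [prD_macJointMeasure_full, prD_macJointMeasure_inputs hchan, he])
  simp only [he] at h
  have h' : ent (macJointMeasure nq pq pS px1 px2 chan)
      (fun z => (X (z.1, z.2.1, z.2.2.1, z.2.2.2.1), z.2.2.2.2,
        Z (z.1, z.2.1, z.2.2.1, z.2.2.2.1))) =
    ent (macJointMeasure nq pq pS px1 px2 chan)
      (fun z => ((X (z.1, z.2.1, z.2.2.1, z.2.2.2.1), Z (z.1, z.2.1, z.2.2.1, z.2.2.2.1)),
        z.2.2.2.2)) := by
    refine ent_congr fun ω ω' => ?_
    simp only [Prod.mk.injEq]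
    tauto
  simp only [condMutInf, condEnt]
  rw [h', h]
  ring

theorem ent_source_time {γ : Type} [Fintype γ] (hpS : IsPmf pS) (hq : IsPmf pq)
    (h₁ : ∀ q s1, IsPmf (px1 q s1)) (h₂ : ∀ q s2, IsPmf (px2 q s2))
    (hchan : ∀ x1 x2, IsPmf (chan x1 x2)) (V : S1 × S2 × W1 → γ) :
    ent (macJointMeasure nq pq pS px1 px2 chan) (fun z => (V z.2.1, z.1)) =
    ent pS V -
    ∑ z, macJointMeasure nq pq pS px1 px2 chan z * Real.log (pq z.1) := by
  rw [ent_comp (prD_macJointMeasure_source hq hchan h₁ h₂) V]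
  refine ent_pair_of_disintegration (macJointMeasure_nonneg hpS hq h₁ h₂ hchan)
    (B := fun z => z.2.1) (Z := fun z => z.1) V (fun _ q => pq q) fun s q => ?_
  rw [prD_macJointMeasure_source hq hchan h₁ h₂, mul_comm,
    ← prD_macJointMeasure_time_source hchan h₁ h₂]
  exact prD_congr fun ω => by simp [and_comm]

theorem ent_snd_input (hpS : IsPmf pS) (hq : IsPmf pq)
    (h₁ : ∀ q s1, IsPmf (px1 q s1)) (h₂ : ∀ q s2, IsPmf (px2 q s2))
    (hchan : ∀ x1 x2, IsPmf (chan x1 x2)) :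
    ent (macJointMeasure nq pq pS px1 px2 chan)
      (fun z => (z.2.2.2.1, z.2.1.2.1, z.2.1.2.2, z.1)) =
    ent pS (fun s => (s.2.1, s.2.2)) -
    (∑ z, macJointMeasure nq pq pS px1 px2 chan z * Real.log (pq z.1)) -
    ∑ z, macJointMeasure nq pq pS px1 px2 chan z * Real.log (px2 z.1 z.2.1.2.1 z.2.2.2.1) := by
  rw [← ent_source_time hpS hq h₁ h₂ hchan]
  refine Eq.trans ?_ (ent_pair_of_disintegration (macJointMeasure_nonneg hpS hq h₁ h₂ hchan)
    (B := fun z => (z.1, z.2.1)) (Z := fun z => z.2.2.2.1)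
    (fun b => ((b.2.2.1, b.2.2.2), b.1)) (fun c x2 => px2 c.2 c.1.1 x2) ?_)
  · refine ent_congr fun ω ω' => ?_
    simp only [Prod.mk.injEq]
    tauto
  · rintro ⟨q, s⟩ x2
    rw [prD_macJointMeasure_snd hchan h₁, prD_macJointMeasure_time_source hchan h₁ h₂]

theorem ent_fst_input (hpS : IsPmf pS) (hq : IsPmf pq)
    (h₁ : ∀ q s1, IsPmf (px1 q s1)) (h₂ : ∀ q s2, IsPmf (px2 q s2))
    (hchan : ∀ x1 x2, IsPmf (chan x1 x2)) :
    ent (macJointMeasure nq pq pS px1 px2 chan)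
      (fun z => (z.2.2.1, z.2.1.1, z.2.1.2.2, z.1)) =
    ent pS (fun s => (s.1, s.2.2)) -
    (∑ z, macJointMeasure nq pq pS px1 px2 chan z * Real.log (pq z.1)) -
    ∑ z, macJointMeasure nq pq pS px1 px2 chan z * Real.log (px1 z.1 z.2.1.1 z.2.2.1) := by
  rw [← ent_source_time hpS hq h₁ h₂ hchan]
  refine Eq.trans ?_ (ent_pair_of_disintegration (macJointMeasure_nonneg hpS hq h₁ h₂ hchan)
    (B := fun z => (z.1, z.2.1)) (Z := fun z => z.2.2.1)
    (fun b => ((b.2.1, b.2.2.2), b.1)) (fun c x1 => px1 c.2 c.1.1 x1) ?_)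
  · refine ent_congr fun ω ω' => ?_
    simp only [Prod.mk.injEq]
    tauto
  · rintro ⟨q, s⟩ x1
    rw [prD_macJointMeasure_fst hchan h₂, prD_macJointMeasure_time_source hchan h₁ h₂]

theorem ent_source (hq : IsPmf pq)
    (h₁ : ∀ q s1, IsPmf (px1 q s1)) (h₂ : ∀ q s2, IsPmf (px2 q s2))
    (hchan : ∀ x1 x2, IsPmf (chan x1 x2)) {γ : Type} [Fintype γ] {V : S1 × S2 × W1 → γ}
    (hV : Function.Injective V) :
    ent pS V = -∑ z, macJointMeasure nq pq pS px1 px2 chan z * Real.log (pS z.2.1) := by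
  have h : ent pS V = ent pS (fun s => s) := ent_congr fun s s' => hV.eq_iff
  rw [h, ent_comp (prD_macJointMeasure_source hq hchan h₁ h₂) (fun s => s),
    ent_eq_neg_sum_mul_log]
  simp only [prD_macJointMeasure_source hq hchan h₁ h₂]

theorem sum_jointTuple_eq (F : S1 × S2 × W1 × Y1 × Fin nq × X1 × X2 → ℝ) :
    ∑ v, F v = ∑ z : Fin nq × (S1 × S2 × W1) × X1 × X2 × Y1,
      F (z.2.1.1, z.2.1.2.1, z.2.1.2.2, z.2.2.2.2, z.1, z.2.2.1, z.2.2.2.1) :=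
  (Fintype.sum_equiv ⟨fun z => (z.2.1.1, z.2.1.2.1, z.2.1.2.2, z.2.2.2.2, z.1, z.2.2.1,
    z.2.2.2.1), fun v => (v.2.2.2.2.1, (v.1, v.2.1, v.2.2.1), v.2.2.2.2.2.1, v.2.2.2.2.2.2,
    v.2.2.2.1), fun _ => rfl, fun _ => rfl⟩ _ _ fun _ => rfl).symm

theorem refFst_eq_prD_mul (z : Fin nq × (S1 × S2 × W1) × X1 × X2 × Y1) :
    refFst pq (fun a b w => pS (a, b, w)) px1 px2 chan
      (z.2.1.1, z.2.1.2.1, z.2.1.2.2, z.2.2.2.2, z.1, z.2.2.1, z.2.2.2.1) =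
    prD (macJointMeasure nq pq pS px1 px2 chan)
      (fun z => (z.2.2.2.2, z.2.2.2.1, z.2.1.2.1, z.2.1.2.2, z.1))
      (z.2.2.2.2, z.2.2.2.1, z.2.1.2.1, z.2.1.2.2, z.1) * px1 z.1 z.2.1.1 z.2.2.1 := by
  obtain ⟨q, ⟨a, b, w⟩, x, x', y⟩ := z
  refine congrArg (· * _) ?_
  dsimp only
  rw [← Fintype.sum_prod_type', prD]
  refine Fintype.sum_of_injective (fun v : S1 × X1 => (q, (v.1, b, w), v.2, x', y)) ?_ _ _ ?_ ?_
  · rintro ⟨a, x⟩ ⟨a', x'⟩ h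
    simpa using h
  · rintro ⟨q₀, ⟨a₀, b₀, w₀⟩, x₀, x₀', y₀⟩ h
    refine if_neg fun h' => h ⟨(a₀, x₀), ?_⟩
    simp only [Prod.mk.injEq] at h'
    simp [h']
  · rintro ⟨a, x⟩
    exact (if_pos rfl).symm

theorem refSnd_eq_prD_mul (z : Fin nq × (S1 × S2 × W1) × X1 × X2 × Y1) :
    refSnd pq (fun a b w => pS (a, b, w)) px1 px2 chan
      (z.2.1.1, z.2.1.2.1, z.2.1.2.2, z.2.2.2.2, z.1, z.2.2.1, z.2.2.2.1) =
    prD (macJointMeasure nq pq pS px1 px2 chan)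
      (fun z => (z.2.2.2.2, z.2.2.1, z.2.1.1, z.2.1.2.2, z.1))
      (z.2.2.2.2, z.2.2.1, z.2.1.1, z.2.1.2.2, z.1) * px2 z.1 z.2.1.2.1 z.2.2.2.1 := by
  obtain ⟨q, ⟨a, b, w⟩, x, x', y⟩ := z
  refine congrArg (· * _) ?_
  dsimp only
  rw [← Fintype.sum_prod_type', prD]
  refine Fintype.sum_of_injective (fun v : S2 × X2 => (q, (a, v.1, w), x, v.2, y)) ?_ _ _ ?_ ?_
  · rintro ⟨a, x⟩ ⟨a', x'⟩ h
    simpa using h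
  · rintro ⟨q₀, ⟨a₀, b₀, w₀⟩, x₀, x₀', y₀⟩ h
    refine if_neg fun h' => h ⟨(b₀, x₀'), ?_⟩
    simp only [Prod.mk.injEq] at h'
    simp [h']
  · rintro ⟨a, x⟩
    exact (if_pos rfl).symm

theorem refBoth_eq_prD_mul (u1 : S1 → Fin nu) (z : Fin nq × (S1 × S2 × W1) × X1 × X2 × Y1) :
    refBoth u1 pq (fun a b w => pS (a, b, w)) px1 px2 chan
      (z.2.1.1, z.2.1.2.1, z.2.1.2.2, z.2.2.2.2, z.1, z.2.2.1, z.2.2.2.1) =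
    prD (macJointMeasure nq pq pS px1 px2 chan)
      (fun z => (z.2.2.2.2, u1 z.2.1.1, z.2.1.2.2, z.1))
      (z.2.2.2.2, u1 z.2.1.1, z.2.1.2.2, z.1) *
      (px1 z.1 z.2.1.1 z.2.2.1 * px2 z.1 z.2.1.2.1 z.2.2.2.1) := by
  obtain ⟨q, ⟨a, b, w⟩, x, x', y⟩ := z
  refine congrArg (· * _) ?_
  dsimp only
  simp only [← Fintype.sum_prod_type', prD]
  refine Fintype.sum_of_injective (fun v : S1 × S2 × X1 × X2 =>
    (q, (v.1, v.2.1, w), v.2.2.1, v.2.2.2, y)) ?_ _ _ ?_ ?_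
  · rintro ⟨a, b, x, x'⟩ ⟨a', b', x₀, x₀'⟩ h
    simpa [and_assoc] using h
  · rintro ⟨q₀, ⟨a₀, b₀, w₀⟩, x₀, x₀', y₀⟩ h
    refine if_neg fun h' => h ⟨(a₀, b₀, x₀, x₀'), ?_⟩
    simp only [Prod.mk.injEq] at h'
    simp [h']
  · rintro ⟨a₀, b₀, x₀, x₀'⟩
    by_cases hu : u1 a₀ = u1 a
    · simp only [hu, if_true]
      rfl
    · simp [hu]

theorem refCommon_eq_prD_mul (z : Fin nq × (S1 × S2 × W1) × X1 × X2 × Y1) :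
    refCommon pq (fun a b w => pS (a, b, w)) px1 px2 chan
      (z.2.1.1, z.2.1.2.1, z.2.1.2.2, z.2.2.2.2, z.1, z.2.2.1, z.2.2.2.1) =
    prD (macJointMeasure nq pq pS px1 px2 chan)
      (fun z => (z.2.2.2.2, z.2.1.2.2)) (z.2.2.2.2, z.2.1.2.2) *
      (pq z.1 * px1 z.1 z.2.1.1 z.2.2.1 * px2 z.1 z.2.1.2.1 z.2.2.2.1) := by
  obtain ⟨q, ⟨a, b, w⟩, x, x', y⟩ := z
  refine congrArg (· * _) ?_
  dsimp only
  simp only [← Fintype.sum_prod_type', prD]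
  refine Fintype.sum_of_injective (fun v : S1 × S2 × Fin nq × X1 × X2 =>
    (v.2.2.1, (v.1, v.2.1, w), v.2.2.2.1, v.2.2.2.2, y)) ?_ _ _ ?_ ?_
  · rintro ⟨a, b, q, x, x'⟩ ⟨a', b', q', x₀, x₀'⟩ h
    simp only [Prod.mk.injEq] at h ⊢
    tauto
  · rintro ⟨q₀, ⟨a₀, b₀, w₀⟩, x₀, x₀', y₀⟩ h
    refine if_neg fun h' => h ⟨(a₀, b₀, q₀, x₀, x₀'), ?_⟩
    simp only [Prod.mk.injEq] at h'
    simp [h']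
  · rintro ⟨a₀, b₀, q₀, x₀, x₀'⟩
    exact (if_pos rfl).symm

end MacInformation

section Divergence

variable {S1 S2 W1 X1 X2 Y1 : Type} [Fintype S1] [Fintype S2] [Fintype W1] [Fintype X1]
  [Fintype X2] [Fintype Y1] {nq nu : ℕ} {pq : Fin nq → ℝ} {pS : S1 × S2 × W1 → ℝ}
  {px1 : Fin nq → S1 → X1 → ℝ} {px2 : Fin nq → S2 → X2 → ℝ} {chan : X1 → X2 → Y1 → ℝ}

theorem sum_mul_log_mul {Ω : Type} [Fintype Ω] {μ F G : Ω → ℝ}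
    (h : ∀ z, μ z ≠ 0 → F z ≠ 0 ∧ G z ≠ 0) :
    ∑ z, μ z * Real.log (F z * G z) =
      ∑ z, μ z * Real.log (F z) + ∑ z, μ z * Real.log (G z) := by
  rw [← Finset.sum_add_distrib]
  refine Finset.sum_congr rfl fun z _ => ?_
  rcases eq_or_ne (μ z) 0 with h0 | h0
  · simp [h0]
  · rw [Real.log_mul (h z h0).1 (h z h0).2, mul_add]

omit [Fintype S1] [Fintype S2] [Fintype W1] [Fintype X1] [Fintype X2] [Fintype Y1] in
theorem macJointMeasure_factors_ne_zero {z : Fin nq × (S1 × S2 × W1) × X1 × X2 × Y1}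
    (hz : macJointMeasure nq pq pS px1 px2 chan z ≠ 0) :
    (((pq z.1 ≠ 0 ∧ pS z.2.1 ≠ 0) ∧ px1 z.1 z.2.1.1 z.2.2.1 ≠ 0) ∧
      px2 z.1 z.2.1.2.1 z.2.2.2.1 ≠ 0) ∧ chan z.2.2.1 z.2.2.2.1 z.2.2.2.2 ≠ 0 := by
  simpa only [macJointMeasure, mul_ne_zero_iff] using hz

theorem sum_mul_log_macJointMeasure :
    ∑ z, macJointMeasure nq pq pS px1 px2 chan z *
      Real.log (macJointMeasure nq pq pS px1 px2 chan z) =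
    ∑ z, macJointMeasure nq pq pS px1 px2 chan z * Real.log (pq z.1) +
    ∑ z, macJointMeasure nq pq pS px1 px2 chan z * Real.log (pS z.2.1) +
    ∑ z, macJointMeasure nq pq pS px1 px2 chan z * Real.log (px1 z.1 z.2.1.1 z.2.2.1) +
    ∑ z, macJointMeasure nq pq pS px1 px2 chan z * Real.log (px2 z.1 z.2.1.2.1 z.2.2.2.1) +
    ∑ z, macJointMeasure nq pq pS px1 px2 chan z *
      Real.log (chan z.2.2.1 z.2.2.2.1 z.2.2.2.2) := by
  rw [← sum_mul_log_mul, ← sum_mul_log_mul, ← sum_mul_log_mul, ← sum_mul_log_mul]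
  · rfl
  all_goals
    intro z hz
    have := macJointMeasure_factors_ne_zero hz
    simp only [ne_eq, mul_eq_zero, not_or]
    tauto

/-- The divergence of `jointTuple` from a measure of the form marginal times `G`. -/
theorem sum_jointTuple_mul_log_sub {α : Type} [Fintype α] (hpS : IsPmf pS) (hq : IsPmf pq)
    (h₁ : ∀ q s1, IsPmf (px1 q s1)) (h₂ : ∀ q s2, IsPmf (px2 q s2))
    (hchan : ∀ x1 x2, IsPmf (chan x1 x2)) {r : S1 × S2 × W1 × Y1 × Fin nq × X1 × X2 → ℝ}
    (T : Fin nq × (S1 × S2 × W1) × X1 × X2 × Y1 → α)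
    (G : Fin nq × (S1 × S2 × W1) × X1 × X2 × Y1 → ℝ)
    (hr : ∀ z : Fin nq × (S1 × S2 × W1) × X1 × X2 × Y1,
      r (z.2.1.1, z.2.1.2.1, z.2.1.2.2, z.2.2.2.2, z.1, z.2.2.1, z.2.2.2.1) =
      prD (macJointMeasure nq pq pS px1 px2 chan) T (T z) * G z)
    (hG : ∀ z, macJointMeasure nq pq pS px1 px2 chan z ≠ 0 → G z ≠ 0) :
    ∑ v, jointTuple pq (fun a b w => pS (a, b, w)) px1 px2 chan v *
      (Real.log (jointTuple pq (fun a b w => pS (a, b, w)) px1 px2 chan v) - Real.log (r v)) =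
    ent (macJointMeasure nq pq pS px1 px2 chan) T -
    ∑ z, macJointMeasure nq pq pS px1 px2 chan z * Real.log (G z) +
    (∑ z, macJointMeasure nq pq pS px1 px2 chan z * Real.log (pq z.1) +
    ∑ z, macJointMeasure nq pq pS px1 px2 chan z * Real.log (pS z.2.1) +
    ∑ z, macJointMeasure nq pq pS px1 px2 chan z * Real.log (px1 z.1 z.2.1.1 z.2.2.1) +
    ∑ z, macJointMeasure nq pq pS px1 px2 chan z * Real.log (px2 z.1 z.2.1.2.1 z.2.2.2.1) +
    ∑ z, macJointMeasure nq pq pS px1 px2 chan z *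
      Real.log (chan z.2.2.1 z.2.2.2.1 z.2.2.2.2)) := by
  rw [← sum_mul_log_macJointMeasure, sum_jointTuple_eq]
  have h : ∀ z : Fin nq × (S1 × S2 × W1) × X1 × X2 × Y1,
      jointTuple pq (fun a b w => pS (a, b, w)) px1 px2 chan
        (z.2.1.1, z.2.1.2.1, z.2.1.2.2, z.2.2.2.2, z.1, z.2.2.1, z.2.2.2.1) =
      macJointMeasure nq pq pS px1 px2 chan z := fun z => rfl
  simp only [hr, h, mul_sub, Finset.sum_sub_distrib]
  rw [sum_mul_log_mul fun z hz => ⟨(prD_apply_pos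
    (macJointMeasure_nonneg hpS hq h₁ h₂ hchan) T hz).ne', hG z hz⟩,
    ent_eq_neg_sum_mul_log]
  ring

theorem divergence_refFst_pos (hpS : IsPmf pS) (hq : IsPmf pq)
    (h₁ : ∀ q s1, IsPmf (px1 q s1)) (h₂ : ∀ q s2, IsPmf (px2 q s2))
    (hchan : ∀ x1 x2, IsPmf (chan x1 x2))
    (h : condEnt pS (fun s => s.1) (fun s => (s.2.1, s.2.2)) <
        condMutInf (macJointMeasure nq pq pS px1 px2 chan)
          (fun z => z.2.2.1) (fun z => z.2.2.2.2)
          (fun z => (z.2.2.2.1, z.2.1.2.1, z.2.1.2.2, z.1))) :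
    0 < ∑ v, jointTuple pq (fun a b w => pS (a, b, w)) px1 px2 chan v *
      (Real.log (jointTuple pq (fun a b w => pS (a, b, w)) px1 px2 chan v) -
        Real.log (refFst pq (fun a b w => pS (a, b, w)) px1 px2 chan v)) := by
  rw [sum_jointTuple_mul_log_sub hpS hq h₁ h₂ hchan _ _ refFst_eq_prD_mul
    fun z hz => (macJointMeasure_factors_ne_zero hz).1.1.2]
  rw [condMutInf_output hpS hq h₁ h₂ hchan (fun b => b.2.2.1)
    (fun b => (b.2.2.2, b.2.1.2.1, b.2.1.2.2, b.1)) (fun c => (c.1, c.2.1)) fun _ => rfl,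
    condEnt, ent_source hq h₁ h₂ hchan (fun s s' h => by simpa [Prod.ext_iff] using h)] at h
  have h' := ent_snd_input hpS hq h₁ h₂ hchan
  dsimp only at h h'
  linarith

theorem divergence_refSnd_pos (hpS : IsPmf pS) (hq : IsPmf pq)
    (h₁ : ∀ q s1, IsPmf (px1 q s1)) (h₂ : ∀ q s2, IsPmf (px2 q s2))
    (hchan : ∀ x1 x2, IsPmf (chan x1 x2))
    (h : condEnt pS (fun s => s.2.1) (fun s => (s.1, s.2.2)) <
        condMutInf (macJointMeasure nq pq pS px1 px2 chan)
          (fun z => z.2.2.2.1) (fun z => z.2.2.2.2)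
          (fun z => (z.2.2.1, z.2.1.1, z.2.1.2.2, z.1))) :
    0 < ∑ v, jointTuple pq (fun a b w => pS (a, b, w)) px1 px2 chan v *
      (Real.log (jointTuple pq (fun a b w => pS (a, b, w)) px1 px2 chan v) -
        Real.log (refSnd pq (fun a b w => pS (a, b, w)) px1 px2 chan v)) := by
  rw [sum_jointTuple_mul_log_sub hpS hq h₁ h₂ hchan _ _ refSnd_eq_prD_mul
    fun z hz => (macJointMeasure_factors_ne_zero hz).1.2]
  rw [condMutInf_output hpS hq h₁ h₂ hchan (fun b => b.2.2.2)
    (fun b => (b.2.2.1, b.2.1.1, b.2.1.2.2, b.1)) (fun c => (c.2.1, c.1)) fun _ => rfl,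
    condEnt, ent_source hq h₁ h₂ hchan (fun s s' h => by
      simp only [Prod.mk.injEq] at h
      ext <;> tauto)] at h
  have h' := ent_fst_input hpS hq h₁ h₂ hchan
  dsimp only at h h'
  linarith

theorem divergence_refBoth_pos (hpS : IsPmf pS) (hq : IsPmf pq)
    (h₁ : ∀ q s1, IsPmf (px1 q s1)) (h₂ : ∀ q s2, IsPmf (px2 q s2))
    (hchan : ∀ x1 x2, IsPmf (chan x1 x2)) (u1 : S1 → Fin nu)
    (h : condEnt pS (fun s => (s.1, s.2.1)) (fun s => (u1 s.1, s.2.2)) <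
        condMutInf (macJointMeasure nq pq pS px1 px2 chan)
          (fun z => (z.2.2.1, z.2.2.2.1)) (fun z => z.2.2.2.2)
          (fun z => (u1 z.2.1.1, z.2.1.2.2, z.1))) :
    0 < ∑ v, jointTuple pq (fun a b w => pS (a, b, w)) px1 px2 chan v *
      (Real.log (jointTuple pq (fun a b w => pS (a, b, w)) px1 px2 chan v) -
        Real.log (refBoth u1 pq (fun a b w => pS (a, b, w)) px1 px2 chan v)) := by
  have hf := fun z (hz : macJointMeasure nq pq pS px1 px2 chan z ≠ 0) =>
    macJointMeasure_factors_ne_zero hz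
  rw [sum_jointTuple_mul_log_sub hpS hq h₁ h₂ hchan _ _ (refBoth_eq_prD_mul u1)
    fun z hz => mul_ne_zero (hf z hz).1.1.2 (hf z hz).1.2,
    sum_mul_log_mul fun z hz => ⟨(hf z hz).1.1.2, (hf z hz).1.2⟩]
  rw [condMutInf_output hpS hq h₁ h₂ hchan (fun b => (b.2.2.1, b.2.2.2))
    (fun b => (u1 b.2.1.1, b.2.1.2.2, b.1)) (fun c => c.1) fun _ => rfl,
    condEnt, ent_source hq h₁ h₂ hchan (fun s s' h => by
      simp only [Prod.mk.injEq] at h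
      ext <;> tauto)] at h
  have h' := ent_source_time hpS hq h₁ h₂ hchan (fun s => (u1 s.1, s.2.2))
  have h'' : ent (macJointMeasure nq pq pS px1 px2 chan)
      (fun z => (u1 z.2.1.1, z.2.1.2.2, z.1)) =
      ent (macJointMeasure nq pq pS px1 px2 chan)
      (fun z => ((u1 z.2.1.1, z.2.1.2.2), z.1)) := ent_congr fun ω ω' => by
    simp only [Prod.mk.injEq]
    tauto
  dsimp only at h h'
  linarith

theorem divergence_refCommon_pos (hpS : IsPmf pS) (hq : IsPmf pq)
    (h₁ : ∀ q s1, IsPmf (px1 q s1)) (h₂ : ∀ q s2, IsPmf (px2 q s2))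
    (hchan : ∀ x1 x2, IsPmf (chan x1 x2))
    (h : condEnt pS (fun s => (s.1, s.2.1)) (fun s => s.2.2) <
        condMutInf (macJointMeasure nq pq pS px1 px2 chan)
          (fun z => (z.2.2.1, z.2.2.2.1)) (fun z => z.2.2.2.2)
          (fun z => z.2.1.2.2)) :
    0 < ∑ v, jointTuple pq (fun a b w => pS (a, b, w)) px1 px2 chan v *
      (Real.log (jointTuple pq (fun a b w => pS (a, b, w)) px1 px2 chan v) -
        Real.log (refCommon pq (fun a b w => pS (a, b, w)) px1 px2 chan v)) := by
  have hf := fun z (hz : macJointMeasure nq pq pS px1 px2 chan z ≠ 0) =>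
    macJointMeasure_factors_ne_zero hz
  rw [sum_jointTuple_mul_log_sub hpS hq h₁ h₂ hchan _ _ refCommon_eq_prD_mul
    fun z hz => mul_ne_zero (mul_ne_zero (hf z hz).1.1.1.1 (hf z hz).1.1.2) (hf z hz).1.2,
    sum_mul_log_mul fun z hz => ⟨mul_ne_zero (hf z hz).1.1.1.1 (hf z hz).1.1.2, (hf z hz).1.2⟩,
    sum_mul_log_mul fun z hz => ⟨(hf z hz).1.1.1.1, (hf z hz).1.1.2⟩]
  rw [condMutInf_output hpS hq h₁ h₂ hchan (fun b => (b.2.2.1, b.2.2.2))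
    (fun b => b.2.1.2.2) (fun c => c.1) fun _ => rfl,
    condEnt, ent_source hq h₁ h₂ hchan (fun s s' h => by
      simp only [Prod.mk.injEq] at h
      ext <;> tauto)] at h
  have h' := ent_comp (prD_macJointMeasure_source (pS := pS) hq hchan h₁ h₂)
    (fun s : S1 × S2 × W1 => s.2.2)
  dsimp only at h h'
  linarith

end Divergence

/-- The source blocks as a triple of blocks of the components. -/
theorem sum_source_block {S1 S2 W1 : Type} [Fintype S1] [Fintype S2] [Fintype W1] {n : ℕ}
    (F : (Fin n → S1) → (Fin n → S2) → (Fin n → W1) → ℝ) :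
    ∑ sb : Fin n → S1 × S2 × W1, F (fun i => (sb i).1) (fun i => (sb i).2.1)
      (fun i => (sb i).2.2) = ∑ a, ∑ b, ∑ w, F a b w := by
  simp only [← Fintype.sum_prod_type']
  exact Fintype.sum_equiv ⟨fun sb => (fun i => (sb i).1, fun i => (sb i).2.1,
    fun i => (sb i).2.2), fun v i => (v.1 i, v.2.1 i, v.2.2 i), fun _ => rfl, fun _ => rfl⟩
    _ _ fun _ => rfl

theorem macErr_eq_sum {S1 S2 W1 X1 X2 Y1 : Type} [Fintype S1] [Fintype S2] [Fintype W1]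
    [Fintype X1] [Fintype X2] [Fintype Y1]
    (pS : S1 × S2 × W1 → ℝ) (chan : X1 → X2 → Y1 → ℝ) (n : ℕ)
    (f : (Fin n → S1) → Fin n → X1) (g : (Fin n → S2) → Fin n → X2)
    (d : (Fin n → Y1) → (Fin n → W1) → (Fin n → S1) × (Fin n → S2)) :
    macErr pS chan n n f g d =
      ∑ a, ∑ b, ∑ w, ∑ y : Fin n → Y1, (∏ i, pS (a i, b i, w i)) *
        (∏ i, chan (f a i) (g b i) (y i)) * (if d y w = (a, b) then 0 else 1) := by
  rw [← sum_source_block fun a b w => ∑ y : Fin n → Y1, (∏ i, pS (a i, b i, w i)) *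
        (∏ i, chan (f a i) (g b i) (y i)) * (if d y w = (a, b) then 0 else 1)]
  rfl

/-- For arbitrarily correlated sources `(S1, S2)` and receiver side
information `W1` transmitted over a DM MAC `p(y1|x1,x2)`, source-channel rate `b = 1`
is achievable if, for some `Q` with `|Q| ≤ min{|X1|·|X2|, |Y1|}` and some joint
distribution `p(q)p(s1,s2,w1)p(x1|q,s1)p(x2|q,s2)p(y1|x1,x2)`,
`H(S1|S2,W1) < I(X1;Y1|X2,S2,W1,Q)`, `H(S2|S1,W1) < I(X2;Y1|X1,S1,W1,Q)`,
`H(S1,S2|U,W1) < I(X1,X2;Y1|U,W1,Q)` and `H(S1,S2|W1) < I(X1,X2;Y1|W1)`,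
where `U` is the Gács–Körner common part of `S1` and `S2`. -/
theorem mac_correlated_sources_rate_one_achievable
    {S1 S2 W1 X1 X2 Y1 : Type}
    [Fintype S1] [Fintype S2] [Fintype W1] [Fintype X1] [Fintype X2] [Fintype Y1]
    (pS : S1 × S2 × W1 → ℝ) (hpS : IsPmf pS)
    (chan : X1 → X2 → Y1 → ℝ) (hchan : ∀ x1 x2, IsPmf (chan x1 x2))
    (h : ∃ (nq nu : ℕ) (pq : Fin nq → ℝ)
      (px1 : Fin nq → S1 → X1 → ℝ) (px2 : Fin nq → S2 → X2 → ℝ)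
      (u1 : S1 → Fin nu) (u2 : S2 → Fin nu),
      nq ≤ min (Fintype.card X1 * Fintype.card X2) (Fintype.card Y1) ∧
      IsPmf pq ∧ (∀ q s1, IsPmf (px1 q s1)) ∧ (∀ q s2, IsPmf (px2 q s2)) ∧
      IsGKCommonPart pS (fun s => s.1) (fun s => s.2.1) u1 u2 ∧
      (condEnt pS (fun s => s.1) (fun s => (s.2.1, s.2.2)) <
        condMutInf (macJointMeasure nq pq pS px1 px2 chan)
          (fun z => z.2.2.1) (fun z => z.2.2.2.2)
          (fun z => (z.2.2.2.1, z.2.1.2.1, z.2.1.2.2, z.1))) ∧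
      (condEnt pS (fun s => s.2.1) (fun s => (s.1, s.2.2)) <
        condMutInf (macJointMeasure nq pq pS px1 px2 chan)
          (fun z => z.2.2.2.1) (fun z => z.2.2.2.2)
          (fun z => (z.2.2.1, z.2.1.1, z.2.1.2.2, z.1))) ∧
      (condEnt pS (fun s => (s.1, s.2.1)) (fun s => (u1 s.1, s.2.2)) <
        condMutInf (macJointMeasure nq pq pS px1 px2 chan)
          (fun z => (z.2.2.1, z.2.2.2.1)) (fun z => z.2.2.2.2)
          (fun z => (u1 z.2.1.1, z.2.1.2.2, z.1))) ∧
      (condEnt pS (fun s => (s.1, s.2.1)) (fun s => s.2.2) <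
        condMutInf (macJointMeasure nq pq pS px1 px2 chan)
          (fun z => (z.2.2.1, z.2.2.2.1)) (fun z => z.2.2.2.2)
          (fun z => z.2.1.2.2))) :
    macAchievable pS chan 1 := by
  obtain ⟨nq, nu, pq, px1, px2, u1, u2, -, hq, h₁, h₂, ⟨hu, -⟩, i1, i2, i3, i4⟩ := h
  intro ε hε
  obtain ⟨n, hn, f, g, d, hfgd⟩ := exists_block_code_lt (pS := fun a b w => pS (a, b, w))
    (u₁ := u1) (u₂ := u2) (fun a b w => hpS.1 _)
    (by simpa only [Fintype.sum_prod_type] using hpS.2) hq h₁ h₂ hchan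
    (fun a b w h => hu (a, b, w) (lt_of_le_of_ne (hpS.1 _) h.symm))
    (divergence_refFst_pos hpS hq h₁ h₂ hchan i1) (divergence_refSnd_pos hpS hq h₁ h₂ hchan i2)
    (divergence_refBoth_pos hpS hq h₁ h₂ hchan u1 i3)
    (divergence_refCommon_pos hpS hq h₁ h₂ hchan i4) hε
  refine ⟨n, n, hn, hn, (one_mul _).symm, f, g, d, ?_⟩
  rw [macErr_eq_sum]
  exact hfgd
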